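/- arXiv:1710.02969 — 8 statements merged into one kernel-verified Lean document; each statement's English description precedes it below -/
import Mathlib

section
/- Let M be a conformal bimodule over the associative conformal algebra Cend_{1,x}. Then H²(Cend_{1,x}, M) = 0; that is, every 2-cocycle of Cend_{1,x} with values in M is a 2-coboundary. -/
open Finset

/-- An associative conformal algebra over a field `F` of characteristic zero:
a left `F[D]`-module `A` (the action of `D` is recorded by the linear map `D`)
equipped with `F`-bilinear products `∘ₙ`, `n ∈ ℤ₊`, satisfying locality,
the `D`-rules and the conformal associativity axiom. -/
structure ConfAlg (F : Type*) [Field F] (A : Type*) [AddCommGroup A] [Module F A] where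
  D : A →ₗ[F] A
  mul : ℕ → A →ₗ[F] A →ₗ[F] A
  locality : ∀ a b : A, ∃ N : ℕ, ∀ n, N ≤ n → mul n a b = 0
  D_left : ∀ (n : ℕ) (a b : A), mul n (D a) b = -((n : F) • mul (n - 1) a b)
  D_right : ∀ (n : ℕ) (a b : A),
    mul n a (D b) = D (mul n a b) + (n : F) • mul (n - 1) a b
  assoc : ∀ (n m : ℕ) (a b c : A),
    mul m (mul n a b) c =
      ∑ s ∈ Finset.range (n + 1),
        ((-1 : F) ^ s * (n.choose s : F)) • mul (n - s) a (mul (m + s) b c)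

/-- `A`, with conformal structure `CA`, is (a copy of) the conformal algebra
`Cend_{1,x}`: the family `xB k = x^k`, `k ≥ 1`, together with all its
`D`-derivatives `D^i x^k`, is a free generating family (i.e. `{x^k : k ≥ 1}` is a
basis of `A` as a free `F[D]`-module) and the products on the basis are
`x^k ∘ₙ x^l = l(l-1)⋯(l-n+1) x^{k+l-n}` (zero for `n > l`). -/
def IsCend1x {F : Type*} [Field F] {A : Type*} [AddCommGroup A] [Module F A]
    (CA : ConfAlg F A) (xB : ℕ → A) : Prop :=
  (LinearIndependent F fun p : ℕ × {k : ℕ // 1 ≤ k} => (CA.D ^ p.1) (xB p.2.1)) ∧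
  (Submodule.span F (Set.range fun p : ℕ × {k : ℕ // 1 ≤ k} => (CA.D ^ p.1) (xB p.2.1)) = ⊤) ∧
  ∀ (k l n : ℕ), 1 ≤ k → 1 ≤ l →
    CA.mul n (xB k) (xB l) = (l.descFactorial n : F) • xB (k + l - n)

/-- A conformal bimodule `M` over the associative conformal algebra `(A, CA)`. -/
structure ConfBimod {F : Type*} [Field F] {A : Type*} [AddCommGroup A] [Module F A]
    (CA : ConfAlg F A) (M : Type*) [AddCommGroup M] [Module F M] where
  D : M →ₗ[F] M
  lmul : ℕ → A →ₗ[F] M →ₗ[F] M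
  rmul : ℕ → M →ₗ[F] A →ₗ[F] M
  loc_left : ∀ (a : A) (u : M), ∃ N : ℕ, ∀ n, N ≤ n → lmul n a u = 0
  loc_right : ∀ (u : M) (a : A), ∃ N : ℕ, ∀ n, N ≤ n → rmul n u a = 0
  D_la : ∀ (n : ℕ) (a : A) (u : M), lmul n (CA.D a) u = -((n : F) • lmul (n - 1) a u)
  D_lu : ∀ (n : ℕ) (a : A) (u : M),
    lmul n a (D u) = D (lmul n a u) + (n : F) • lmul (n - 1) a u
  D_ru : ∀ (n : ℕ) (u : M) (a : A), rmul n (D u) a = -((n : F) • rmul (n - 1) u a)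
  D_ra : ∀ (n : ℕ) (u : M) (a : A),
    rmul n u (CA.D a) = D (rmul n u a) + (n : F) • rmul (n - 1) u a
  assoc_aau : ∀ (m n : ℕ) (a b : A) (u : M),
    lmul n (CA.mul m a b) u =
      ∑ s ∈ Finset.range (m + 1),
        ((-1 : F) ^ s * (m.choose s : F)) • lmul (m - s) a (lmul (n + s) b u)
  assoc_uaa : ∀ (m n : ℕ) (u : M) (a b : A),
    rmul n (rmul m u a) b =
      ∑ s ∈ Finset.range (m + 1),
        ((-1 : F) ^ s * (m.choose s : F)) • rmul (m - s) u (CA.mul (n + s) a b)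
  assoc_aua : ∀ (m n : ℕ) (a : A) (u : M) (b : A),
    rmul n (lmul m a u) b =
      ∑ s ∈ Finset.range (m + 1),
        ((-1 : F) ^ s * (m.choose s : F)) • lmul (m - s) a (rmul (n + s) u b)

/-- A 2-cochain of a conformal algebra `(A, CA)` with coefficients in the
conformal bimodule `(M, B)`: a family of `F`-bilinear maps `f s : A × A → M`
satisfying the `D`-rules and locality. -/
structure Cochain2 {F : Type*} [Field F] {A : Type*} [AddCommGroup A] [Module F A]
    {M : Type*} [AddCommGroup M] [Module F M]
    (CA : ConfAlg F A) (B : ConfBimod CA M) where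
  f : ℕ → A →ₗ[F] A →ₗ[F] M
  D_left : ∀ (s : ℕ) (a b : A), f s (CA.D a) b = -((s : F) • f (s - 1) a b)
  D_right : ∀ (s : ℕ) (a b : A),
    f s a (CA.D b) = B.D (f s a b) + (s : F) • f (s - 1) a b
  loc : ∀ a b : A, ∃ N : ℕ, ∀ s, N ≤ s → f s a b = 0

/-- The 2-cocycle condition. -/
def IsCocycle {F : Type*} [Field F] {A : Type*} [AddCommGroup A] [Module F A]
    {M : Type*} [AddCommGroup M] [Module F M]
    {CA : ConfAlg F A} {B : ConfBimod CA M} (φ : Cochain2 CA B) : Prop :=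
  ∀ (n m : ℕ) (a b c : A),
    B.lmul n a (φ.f m b c) + φ.f n a (CA.mul m b c) =
      ∑ s ∈ Finset.range (n + 1), (n.choose s : F) •
        (φ.f (m + s) (CA.mul (n - s) a b) c + B.rmul (m + s) (φ.f (n - s) a b) c)

/-- `φ` is a 2-coboundary: `φ = δτ` for some `H`-linear 1-cochain `τ : A → M`. -/
def IsCoboundary {F : Type*} [Field F] {A : Type*} [AddCommGroup A] [Module F A]
    {M : Type*} [AddCommGroup M] [Module F M]
    {CA : ConfAlg F A} {B : ConfBimod CA M} (φ : Cochain2 CA B) : Prop :=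
  ∃ τ : A →ₗ[F] M, (∀ a : A, τ (CA.D a) = B.D (τ a)) ∧
    ∀ (n : ℕ) (a b : A),
      φ.f n a b = B.lmul n a (τ b) - τ (CA.mul n a b) + B.rmul n (τ a) b

/-!
Fix the generator `x`, so that `x ∘₁ x = x` and `x ∘ₙ x = 0` for `n ≥ 2`. The operators
`Lₙ : u ↦ x ∘ₙ u` on a bimodule satisfy the relations of the elements `x∂ⁿ` of the Weyl algebra;
since every vector is killed by `Lₙ` for large `n`, the Euler operator `L₁` is diagonalizable with
eigenvalues in `ℕ`. The vectors `u` with `u ∘₁ x = u` and `u ∘ₙ x = 0` for `n ≥ 2` form a subspace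
`V` stable under the left action and containing all products `u ∘ₙ x`. Hence on `M ⧸ V` and on `V`
the right action of `x` is `0`, respectively the identity in degree `1`, and there the cocycle
identity for `φₙ(x, x)`, `n ≥ 1`, is solved by splitting into eigenvectors of `L₁`. Two
coboundaries thus kill `φₙ(x, x)` for `n ≥ 1`, and a third, defined recursively on the powers of
`x`, kills `φ₀(x, xᵏ)`. A cocycle normalized in this way vanishes, by induction on the powers of
`x`.
-/

section BinomialInversion

variable {R M : Type*} [CommRing R] [AddCommGroup M] [Module R M]

-- The binomial theorem for `E ^ n = ((E - S) + S) ^ n`, where `E` and `S` shift the two indices.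
theorem eq_sum_choose_smul_of_eq_sum_neg_one_pow_smul {f g : ℕ → ℕ → M}
    (h : ∀ n m, f n m = ∑ s ∈ range (n + 1), ((-1 : R) ^ s * n.choose s) • g (n - s) (m + s))
    (n m : ℕ) : g n m = ∑ s ∈ range (n + 1), (n.choose s : R) • f (n - s) (m + s) := by
  let E : Module.End R (ℕ → ℕ → M) :=
    { toFun u := fun i j ↦ u (i + 1) j, map_add' _ _ := rfl, map_smul' _ _ := rfl }
  let S : Module.End R (ℕ → ℕ → M) :=
    { toFun u := fun i j ↦ u i (j + 1), map_add' _ _ := rfl, map_smul' _ _ := rfl }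
  have hES : Commute S E := rfl
  have hE (k i j : ℕ) (u) : (E ^ k) u i j = u (i + k) j := by
    induction k generalizing i with
    | zero => rfl
    | succ k ih => rw [pow_succ', Module.End.mul_apply, ← add_assoc, add_right_comm, ← ih]; rfl
  have hS (k i j : ℕ) (u) : (S ^ k) u i j = u i (j + k) := by
    induction k generalizing j with
    | zero => rfl
    | succ k ih => rw [pow_succ', Module.End.mul_apply, ← add_assoc, add_right_comm, ← ih]; rfl
  have hf (k j : ℕ) : f k j = ((E - S) ^ k) g 0 j := by
    have hsub : E - S = (-1 : R) • S + E := by module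
    simp only [h, hsub, (hES.smul_left (-1 : R)).add_pow, smul_pow, smul_mul_assoc, hS, hE,
      ← nsmul_eq_mul', ← Nat.cast_smul_eq_nsmul R, LinearMap.sum_apply, Finset.sum_apply,
      LinearMap.smul_apply, Pi.smul_apply, Module.End.mul_apply, smul_smul, mul_comm, zero_add]
  calc
    g n m = ((S + (E - S)) ^ n) g 0 m := by rw [add_sub_cancel, hE, zero_add]
    _ = ∑ s ∈ range (n + 1), (n.choose s : R) • f (n - s) (m + s) := by
      simp_rw [(hES.sub_right (Commute.refl S)).add_pow, ← nsmul_eq_mul',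
        ← Nat.cast_smul_eq_nsmul R, LinearMap.sum_apply, Finset.sum_apply, LinearMap.smul_apply,
        Pi.smul_apply, Module.End.mul_apply, hS, hf]

end BinomialInversion

section Eigenspaces

variable {F N ι : Type*} [Field F] [AddCommGroup N] [Module F N]

theorem mem_sup_eigenspace_of_sub_smul_mem {T : Module.End F N} {a : ι → F} {s : Set ι} {μ : F}
    (hμ : ∀ i ∈ s, a i ≠ μ) {v : N} (hv : T v - μ • v ∈ ⨆ i ∈ s, T.eigenspace (a i)) :
    v ∈ (⨆ i ∈ s, T.eigenspace (a i)) ⊔ T.eigenspace μ := by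
  have hmap : ⨆ i ∈ s, T.eigenspace (a i) ≤
      (⨆ i ∈ s, T.eigenspace (a i)).map (T - algebraMap F _ μ) := by
    refine iSup₂_le fun i hi w hw ↦ ⟨(a i - μ)⁻¹ • w,
      Submodule.smul_mem _ _ (Submodule.mem_iSup_of_mem i (Submodule.mem_iSup_of_mem hi hw)), ?_⟩
    rw [Module.End.mem_eigenspace_iff] at hw
    rw [map_smul, LinearMap.sub_apply, hw, Module.algebraMap_end_apply, ← sub_smul,
      inv_smul_smul₀ (sub_ne_zero.2 (hμ i hi))]
  obtain ⟨w, hw, hwv⟩ := hmap hv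
  rw [LinearMap.sub_apply, Module.algebraMap_end_apply] at hwv
  refine Submodule.mem_sup.2 ⟨w, hw, v - w, ?_, add_sub_cancel _ _⟩
  rw [Module.End.mem_eigenspace_iff, map_sub, smul_sub, sub_eq_sub_iff_sub_eq_sub]
  exact hwv.symm

/-- Operators `L n` satisfying the relations of the elements `x∂ⁿ` of the Weyl algebra
`[∂, x] = 1` and acting locally nilpotently, in the sense that each vector is killed by all but
finitely many of them. They encode the left action of the generator `x` of `Cend_{1,x}`. When
`n = m = 0` the truncated index `n + m - 1` occurs with coefficient zero. -/
structure IsWeylFamily (L : ℕ → Module.End F N) : Prop where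
  comp : ∀ n m v, L n (L m v) = L 0 (L (n + m) v) + (n : F) • L (n + m - 1) v
  locality : ∀ v, ∃ K, ∀ n, K ≤ n → L n v = 0

namespace IsWeylFamily

variable {L : ℕ → Module.End F N} (hL : IsWeylFamily L)
include hL

theorem one_comp (n : ℕ) (v : N) : L 1 (L n v) = L 0 (L (n + 1) v) + L n v := by
  simp [hL.comp 1 n, add_comm 1 n]

theorem comp_one (n : ℕ) (v : N) : L n (L 1 v) = L 0 (L (n + 1) v) + (n : F) • L n v := by
  simp [hL.comp n 1]

theorem restrict {V : Submodule F N} (hV : ∀ n, ∀ v ∈ V, L n v ∈ V) :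
    IsWeylFamily fun n ↦ (L n).restrict (hV n) where
  comp n m v := Subtype.ext (hL.comp n m v)
  locality v := (hL.locality v).imp fun _ hK n hn ↦ Subtype.ext (hK n hn)

theorem mapQ {V : Submodule F N} (hV : ∀ n, ∀ v ∈ V, L n v ∈ V) :
    IsWeylFamily fun n ↦ V.mapQ V (L n) (hV n) where
  comp n m v := by
    obtain ⟨v, rfl⟩ := V.mkQ_surjective v
    exact congrArg V.mkQ (hL.comp n m v)
  locality v := by
    obtain ⟨v, rfl⟩ := V.mkQ_surjective v
    exact (hL.locality v).imp fun _ hK n hn ↦ congrArg V.mkQ (hK n hn)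

variable [CharZero F]

-- `L 1 - (K + 1)` lowers the degree of nilpotency: on a vector killed by all `L n` with
-- `n > K + 1`, the operator `L (K + 1)` takes values in the eigenspace of eigenvalue `1`.
theorem mem_iSup_eigenspace {K : ℕ} {v : N} (hv : ∀ n, K < n → L n v = 0) :
    v ∈ ⨆ j < K + 1, (L 1).eigenspace (j : F) := by
  induction K generalizing v with
  | zero => simpa using hv 1 one_pos
  | succ K ih =>
    rw [Nat.iSup_lt_succ]
    refine mem_sup_eigenspace_of_sub_smul_mem (s := Set.Iio (K + 1))
      (fun i hi ↦ Nat.cast_injective.ne (ne_of_lt hi)) (ih fun n hn ↦ ?_)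
    rw [map_sub, map_smul, hL.comp_one, ← sub_eq_iff_eq_add.2 (hL.one_comp n v)]
    obtain hn | rfl := Nat.lt_or_eq_of_le (Nat.succ_le_of_lt hn)
    · simp [hv n hn]
    · have hfix : L 1 (L (K + 1) v) = L (K + 1) v := by
        rw [hL.one_comp, hv (K + 2) (Nat.lt_succ_self _), map_zero, zero_add]
      rw [hfix]
      module

theorem iSup_eigenspace_eq_top : ⨆ j : ℕ, (L 1).eigenspace (j : F) = ⊤ := by
  refine eq_top_iff.2 fun v _ ↦ ?_
  obtain ⟨K, hK⟩ := hL.locality v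
  exact iSup₂_le_iSup _ (fun j : ℕ ↦ (L 1).eigenspace (j : F))
    (hL.mem_iSup_eigenspace fun n hn ↦ hK n hn.le)

theorem eq_zero_of_apply_eq_smul {μ : F} (hμ : ∀ j : ℕ, (j : F) ≠ μ) {v : N}
    (hv : L 1 v = μ • v) : v = 0 := by
  refine Submodule.disjoint_def.1 ((L 1).eigenspaces_iSupIndep μ) v
    (Module.End.mem_eigenspace_iff.2 hv) ?_
  have hle : ⨆ j : ℕ, (L 1).eigenspace (j : F) ≤ ⨆ ν, ⨆ (_ : ν ≠ μ), (L 1).eigenspace ν :=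
    iSup_le fun j ↦ le_iSup₂_of_le (j : F) (hμ j) le_rfl
  exact hle (hL.iSup_eigenspace_eq_top ▸ Submodule.mem_top)

theorem exists_apply_sub_smul_add_eq (c : F) (v : N) :
    ∃ u w, L 1 u - c • u + w = v ∧ L 1 w = c • w := by
  have hle : ⨆ j : ℕ, (L 1).eigenspace (j : F) ≤
      LinearMap.range (L 1 - algebraMap F _ c) ⊔ (L 1).eigenspace c := by
    refine iSup_le fun j ↦ ?_
    obtain rfl | hj := eq_or_ne (j : F) c
    · exact le_sup_right
    · refine le_sup_of_le_left fun w hw ↦ ⟨((j : F) - c)⁻¹ • w, ?_⟩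
      rw [map_smul, LinearMap.sub_apply, Module.End.mem_eigenspace_iff.1 hw,
        Module.algebraMap_end_apply, ← sub_smul, inv_smul_smul₀ (sub_ne_zero.2 hj)]
  have hv : v ∈ ⨆ j : ℕ, (L 1).eigenspace (j : F) := hL.iSup_eigenspace_eq_top ▸ Submodule.mem_top
  obtain ⟨_, ⟨u, rfl⟩, w, hw, rfl⟩ := Submodule.mem_sup.1 (hle hv)
  exact ⟨u, w, rfl, Module.End.mem_eigenspace_iff.1 hw⟩

end IsWeylFamily

/-- The identities satisfied by `p n = φₙ₊₁(x, x)` for a 2-cocycle `φ` with values in a bimodule on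
which right multiplication by `x` acts as `u ∘₁ x = (1 - c) u` and `u ∘ₙ x = 0` for `n ≥ 2`. The
index is shifted since `φ₀(x, x)` plays no part in them. -/
structure IsScalarCocycle (L : ℕ → Module.End F N) (c : F) (p : ℕ → N) : Prop where
  one_apply : ∀ n, L 1 (p (n + 1)) = L 0 (p (n + 2)) + p (n + 1)
  apply_zero : ∀ n, L (n + 1) (p 0) = L 0 (p (n + 1)) + ((n : F) + 1 - c) • p n

namespace IsScalarCocycle

variable {L : ℕ → Module.End F N} {c : F} {p q : ℕ → N}

theorem sub (hp : IsScalarCocycle L c p) (hq : IsScalarCocycle L c q) :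
    IsScalarCocycle L c (p - q) where
  one_apply n := by
    simp only [Pi.sub_apply, map_sub, hp.one_apply, hq.one_apply]
    abel
  apply_zero n := by
    simp only [Pi.sub_apply, map_sub, hp.apply_zero, hq.apply_zero]
    module

theorem coboundary (hL : IsWeylFamily L) (hc : IsIdempotentElem c) (u : N) :
    IsScalarCocycle L c fun n ↦ L (n + 1) u - if n = 0 then c • u else 0 where
  one_apply n := by simp [hL.one_comp]
  apply_zero n := by
    have hcc : c • c • u = c • u := by rw [smul_smul, hc.eq]
    rcases n with _ | n
    · simp only [reduceIte, map_sub, map_smul, hL.comp_one, zero_add, smul_sub, one_ne_zero,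
        sub_zero, Nat.cast_zero]
      linear_combination (norm := module) -hcc
    · simp only [reduceIte, map_sub, map_smul, hL.comp_one, zero_add,
        Nat.add_eq_zero_iff, one_ne_zero, and_false, sub_zero, Nat.cast_add, Nat.cast_one]
      module

variable [CharZero F]

-- `L n (p 0)` has `L 1`-weight `c + 1 - n`; for large `n` this is negative, so `L n (p 0) = 0`,
-- and then the cocycle identities make `p (n - 1)` a vector of negative weight as well.
theorem apply_eq_zero_of_one_apply_zero (hL : IsWeylFamily L) (hc : c = 0 ∨ c = 1)
    (hp : IsScalarCocycle L c p) (h : L 1 (p 0) = c • p 0) (n : ℕ) : p n = 0 := by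
  have hweight (n : ℕ) : L 1 (L n (p 0)) = (c + 1 - n) • L n (p 0) := by
    have hcomm := hL.comp_one n (p 0)
    rw [h, map_smul, ← sub_eq_iff_eq_add.2 (hL.one_comp n (p 0))] at hcomm
    linear_combination (norm := module) -hcomm
  have hneg (n j : ℕ) : (j : F) ≠ c + 1 - (n + 3 : ℕ) := by
    intro hj
    have hcast : ((j + n + 2 : ℕ) : F) = c := by push_cast at hj ⊢; linear_combination hj
    rcases hc with rfl | rfl
    · exact Nat.cast_ne_zero.2 (by omega) hcast
    · exact Nat.cast_ne_one.2 (by omega) hcast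
  have hlarge (n : ℕ) : p (n + 2) = 0 := by
    refine hL.eq_zero_of_apply_eq_smul (hneg n) ?_
    have hL0 := hp.apply_zero (n + 2)
    rw [hL.eq_zero_of_apply_eq_smul (hneg n) (hweight (n + 3))] at hL0
    rw [hp.one_apply (n + 1)]
    push_cast at hL0 ⊢
    linear_combination (norm := module) -hL0
  have hc2 : 2 - c ≠ 0 := by rcases hc with rfl | rfl <;> norm_num
  have hone : p 1 = 0 := by
    have hfix : L 1 (p 1) = p 1 := by rw [hp.one_apply, hlarge, map_zero, zero_add]
    have hL2 : L 2 (p 0) = (2 - c) • p 1 := by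
      rw [hp.apply_zero 1, hlarge, map_zero, zero_add, Nat.cast_one, one_add_one_eq_two]
    have hsq := hweight 2
    rw [hL2, map_smul, hfix] at hsq
    have : ((2 - c) * (2 - c)) • p 1 = 0 := by
      push_cast at hsq
      linear_combination (norm := module) hsq
    exact (smul_eq_zero.1 this).resolve_left (mul_ne_zero hc2 hc2)
  have hzero : p 0 = 0 := by
    have hL1 := hp.apply_zero 0
    rw [zero_add, hone, map_zero, h] at hL1
    rcases hc with rfl | rfl <;> simpa [eq_comm] using hL1
  match n with
  | 0 => exact hzero
  | 1 => exact hone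
  | n + 2 => exact hlarge n

theorem exists_eq_coboundary (hL : IsWeylFamily L) (hc : c = 0 ∨ c = 1)
    (hp : IsScalarCocycle L c p) :
    ∃ u, ∀ n, p n = L (n + 1) u - if n = 0 then c • u else 0 := by
  obtain ⟨u, w, huw, hw⟩ := hL.exists_apply_sub_smul_add_eq c (p 0)
  have hsub := hp.sub (coboundary hL (IsIdempotentElem.iff_eq_zero_or_one.2 hc) u)
  refine ⟨u, fun n ↦ sub_eq_zero.1 (hsub.apply_eq_zero_of_one_apply_zero hL hc ?_ n)⟩
  simpa [← huw] using hw

end IsScalarCocycle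

end Eigenspaces

section ConformalCohomology

variable {F : Type*} [Field F] {A : Type*} [AddCommGroup A] [Module F A]
  {M : Type*} [AddCommGroup M] [Module F M] {CA : ConfAlg F A} {B : ConfBimod CA M}

section Associativity

theorem ConfAlg.mul_mul_eq_sum (CA : ConfAlg F A) (n m : ℕ) (a b c : A) :
    CA.mul n a (CA.mul m b c) =
      ∑ s ∈ range (n + 1), (n.choose s : F) • CA.mul (m + s) (CA.mul (n - s) a b) c :=
  eq_sum_choose_smul_of_eq_sum_neg_one_pow_smul (R := F)
    (f := fun n m ↦ CA.mul m (CA.mul n a b) c) (g := fun n m ↦ CA.mul n a (CA.mul m b c))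
    (fun n m ↦ CA.assoc n m a b c) n m

namespace ConfBimod

variable (B : ConfBimod CA M)

theorem lmul_lmul_eq_sum (n m : ℕ) (a b : A) (u : M) :
    B.lmul n a (B.lmul m b u) =
      ∑ s ∈ range (n + 1), (n.choose s : F) • B.lmul (m + s) (CA.mul (n - s) a b) u :=
  eq_sum_choose_smul_of_eq_sum_neg_one_pow_smul (R := F)
    (f := fun n m ↦ B.lmul m (CA.mul n a b) u) (g := fun n m ↦ B.lmul n a (B.lmul m b u))
    (fun n m ↦ B.assoc_aau n m a b u) n m

theorem lmul_rmul_eq_sum (n m : ℕ) (a : A) (u : M) (b : A) :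
    B.lmul n a (B.rmul m u b) =
      ∑ s ∈ range (n + 1), (n.choose s : F) • B.rmul (m + s) (B.lmul (n - s) a u) b :=
  eq_sum_choose_smul_of_eq_sum_neg_one_pow_smul (R := F)
    (f := fun n m ↦ B.rmul m (B.lmul n a u) b) (g := fun n m ↦ B.lmul n a (B.rmul m u b))
    (fun n m ↦ B.assoc_aua n m a u b) n m

theorem rmul_mul_eq_sum (n m : ℕ) (u : M) (a b : A) :
    B.rmul n u (CA.mul m a b) =
      ∑ s ∈ range (n + 1), (n.choose s : F) • B.rmul (m + s) (B.rmul (n - s) u a) b :=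
  eq_sum_choose_smul_of_eq_sum_neg_one_pow_smul (R := F)
    (f := fun n m ↦ B.rmul m (B.rmul n u a) b) (g := fun n m ↦ B.rmul n u (CA.mul m a b))
    (fun n m ↦ B.assoc_uaa n m u a b) n m

end ConfBimod

end Associativity

section Coboundary

/-- A 1-cochain: an `F[D]`-linear map from the conformal algebra to the bimodule. -/
structure Cochain1 (CA : ConfAlg F A) (B : ConfBimod CA M) where
  f : A →ₗ[F] M
  map_D : ∀ a, f (CA.D a) = B.D (f a)

instance : Add (Cochain1 CA B) where
  add σ τ := ⟨σ.f + τ.f, fun a ↦ by simp [σ.map_D, τ.map_D]⟩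

instance : Sub (Cochain2 CA B) where
  sub φ ψ :=
    { f n := φ.f n - ψ.f n
      D_left s a b := by
        simp only [LinearMap.sub_apply, φ.D_left, ψ.D_left]
        module
      D_right s a b := by
        simp only [LinearMap.sub_apply, φ.D_right, ψ.D_right, map_sub]
        module
      loc a b := by
        obtain ⟨K, hK⟩ := φ.loc a b
        obtain ⟨K', hK'⟩ := ψ.loc a b
        exact ⟨max K K', fun s hs ↦ by simp [hK s (by omega), hK' s (by omega)]⟩ }

theorem Cochain2.sub_apply (φ ψ : Cochain2 CA B) (n : ℕ) (a b : A) :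
    (φ - ψ).f n a b = φ.f n a b - ψ.f n a b := rfl

/-- The coboundary `δτ` of a 1-cochain `τ`, as a 2-cochain. -/
def Cochain1.coboundary (τ : Cochain1 CA B) : Cochain2 CA B where
  f n := (B.lmul n).compl₂ τ.f - (CA.mul n).compr₂ τ.f + (B.rmul n).comp τ.f
  D_left s a b := by
    simp only [LinearMap.sub_apply, LinearMap.add_apply, LinearMap.compl₂_apply,
      LinearMap.compr₂_apply, LinearMap.comp_apply, B.D_la, CA.D_left, τ.map_D, B.D_ru,
      map_neg, map_smul]
    module
  D_right s a b := by
    simp only [LinearMap.sub_apply, LinearMap.add_apply, LinearMap.compl₂_apply,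
      LinearMap.compr₂_apply, LinearMap.comp_apply, B.D_lu, CA.D_right, τ.map_D, B.D_ra,
      map_smul, map_add, map_sub]
    module
  loc a b := by
    obtain ⟨K₁, h₁⟩ := B.loc_left a (τ.f b)
    obtain ⟨K₂, h₂⟩ := CA.locality a b
    obtain ⟨K₃, h₃⟩ := B.loc_right (τ.f a) b
    exact ⟨K₁ + K₂ + K₃, fun s hs ↦ by
      simp [h₁ s (by omega), h₂ s (by omega), h₃ s (by omega)]⟩

theorem Cochain1.coboundary_apply (τ : Cochain1 CA B) (n : ℕ) (a b : A) :
    τ.coboundary.f n a b = B.lmul n a (τ.f b) - τ.f (CA.mul n a b) + B.rmul n (τ.f a) b := rfl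

theorem Cochain1.isCocycle_coboundary (τ : Cochain1 CA B) : IsCocycle τ.coboundary := by
  intro n m a b c
  simp only [coboundary_apply, map_sub, map_add, LinearMap.sub_apply, LinearMap.add_apply,
    smul_add, smul_sub, sum_add_distrib, sum_sub_distrib]
  rw [B.lmul_lmul_eq_sum, B.lmul_rmul_eq_sum, B.rmul_mul_eq_sum, CA.mul_mul_eq_sum]
  simp only [map_sum, map_smul]
  abel

theorem IsCocycle.sub {φ ψ : Cochain2 CA B} (hφ : IsCocycle φ) (hψ : IsCocycle ψ) :
    IsCocycle (φ - ψ) := by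
  intro n m a b c
  simp only [Cochain2.sub_apply, map_sub, LinearMap.sub_apply]
  rw [sub_add_sub_comm, hφ, hψ, ← sum_sub_distrib]
  refine sum_congr rfl fun s _ ↦ ?_
  module

theorem IsCoboundary.of_sub_coboundary {φ : Cochain2 CA B} (τ : Cochain1 CA B)
    (h : IsCoboundary (φ - τ.coboundary)) : IsCoboundary φ := by
  obtain ⟨σ, hσD, hσ⟩ := h
  refine ⟨σ + τ.f, fun a ↦ by simp [hσD, τ.map_D], fun n a b ↦ ?_⟩
  rw [← sub_add_cancel (φ.f n a b) (τ.coboundary.f n a b), ← Cochain2.sub_apply, hσ,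
    τ.coboundary_apply]
  simp only [LinearMap.add_apply, map_add]
  abel

theorem isCoboundary_of_apply_eq_zero {φ : Cochain2 CA B} (h : ∀ n a b, φ.f n a b = 0) :
    IsCoboundary φ :=
  ⟨0, by simp, by simp [h]⟩

end Coboundary

section EulerElement

/-- An element with `x ∘₁ x = x` and `x ∘ₙ x = 0` for `n ≥ 2`, such as the generator `x` of
`Cend_{1,x}`. Its first product with itself corresponds to the Euler operator `x∂`. -/
structure IsEulerElement (CA : ConfAlg F A) (x : A) : Prop where
  mul_one : CA.mul 1 x x = x
  mul_add_two : ∀ n, CA.mul (n + 2) x x = 0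

/-- The subspace of vectors on which right multiplication by `x` acts as the identity in degree `1`
and as zero in higher degrees; degree `0` is not restricted. -/
def ConfBimod.rightUnital (B : ConfBimod CA M) (x : A) : Submodule F M where
  carrier := {u | B.rmul 1 u x = u ∧ ∀ n, B.rmul (n + 2) u x = 0}
  add_mem' hu hv := ⟨by simp [hu.1, hv.1], fun n ↦ by simp [hu.2, hv.2]⟩
  zero_mem' := by simp
  smul_mem' r u hu := ⟨by simp [hu.1], fun n ↦ by simp [hu.2]⟩

theorem ConfBimod.lmul_mem_rightUnital {x : A} {u : M} (hu : u ∈ B.rightUnital x) (n : ℕ) (a : A) :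
    B.lmul n a u ∈ B.rightUnital x := by
  refine ⟨?_, fun k ↦ ?_⟩
  · rw [B.assoc_aua, sum_range_succ', sum_eq_zero fun s _ ↦ ?_]
    · simp [hu.1]
    · rw [show 1 + (s + 1) = s + 2 by omega, hu.2, map_zero, smul_zero]
  · rw [B.assoc_aua]
    refine sum_eq_zero fun s _ ↦ ?_
    rw [add_right_comm, hu.2, map_zero, smul_zero]

namespace IsEulerElement

variable {x : A} (hx : IsEulerElement CA x)
include hx

theorem mul_self_succ (n : ℕ) : CA.mul (n + 1) x x = if n = 0 then x else 0 := by
  rcases n with _ | n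
  · exact hx.mul_one
  · exact hx.mul_add_two n

theorem sum_choose_smul_apply_mul {G : Type*} [AddCommGroup G] [Module F G] (g : ℕ → A →ₗ[F] G)
    (n : ℕ) :
    ∑ s ∈ range (n + 1), (n.choose s : F) • g s (CA.mul (n - s) x x) =
      g n (CA.mul 0 x x) + (n : F) • g (n - 1) x := by
  rcases n with _ | n
  · simp
  · rw [sum_range_succ, sum_range_succ, sum_eq_zero fun s hs ↦ ?_]
    · simp [hx.mul_one, add_comm]
    · obtain ⟨k, rfl⟩ := Nat.exists_eq_add_of_lt (mem_range.1 hs)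
      rw [show s + k + 1 + 1 - s = k + 2 by omega, hx.mul_add_two, map_zero, smul_zero]

theorem lmul_lmul (n m : ℕ) (u : M) :
    B.lmul n x (B.lmul m x u) =
      B.lmul (m + n) (CA.mul 0 x x) u + (n : F) • B.lmul (m + (n - 1)) x u := by
  rw [B.lmul_lmul_eq_sum]
  exact hx.sum_choose_smul_apply_mul (fun s ↦ (B.lmul (m + s)).flip u) n

theorem isWeylFamily_lmul (B : ConfBimod CA M) : IsWeylFamily fun n ↦ B.lmul n x where
  comp n m u := by
    rcases n with _ | n
    · simp
    · simp [hx.lmul_lmul, add_comm m]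
  locality := B.loc_left x

theorem rmul_mem_rightUnital (n : ℕ) (u : M) : B.rmul n u x ∈ B.rightUnital x := by
  refine ⟨?_, fun k ↦ ?_⟩
  · rw [B.assoc_uaa, sum_range_succ', sum_eq_zero fun s _ ↦ ?_]
    · simp [hx.mul_one]
    · rw [show 1 + (s + 1) = s + 2 by omega, hx.mul_add_two, map_zero, smul_zero]
  · rw [B.assoc_uaa]
    refine sum_eq_zero fun s _ ↦ ?_
    rw [add_right_comm, hx.mul_add_two, map_zero, smul_zero]

theorem coboundary_apply_self (τ : Cochain1 CA B) (n : ℕ) :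
    τ.coboundary.f (n + 1) x x =
      B.lmul (n + 1) x (τ.f x) - (if n = 0 then τ.f x else 0) + B.rmul (n + 1) (τ.f x) x := by
  rw [τ.coboundary_apply, hx.mul_self_succ, apply_ite τ.f, map_zero]

variable {φ : Cochain2 CA B} (hφ : IsCocycle φ)
include hφ

theorem cocycle_apply (n m : ℕ) (c : A) :
    B.lmul n x (φ.f m x c) + φ.f n x (CA.mul m x c) =
      φ.f (m + n) (CA.mul 0 x x) c + (n : F) • φ.f (m + (n - 1)) x c +
        ∑ s ∈ range (n + 1), (n.choose s : F) • B.rmul (m + s) (φ.f (n - s) x x) c := by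
  rw [hφ n m x x c]
  simp only [smul_add, sum_add_distrib]
  exact congrArg (· + _) (hx.sum_choose_smul_apply_mul (fun s ↦ (φ.f (m + s)).flip c) n)

-- The cocycle identities for the degree pairs `(n, m)` and `(0, m + n)` both contain the terms with
-- `x ∘₀ x` and `φ₀(x, x)`, which cancel in the difference.
theorem cocycle_apply_eliminated (n m : ℕ) (c : A) :
    B.lmul n x (φ.f m x c) + φ.f n x (CA.mul m x c) =
      B.lmul 0 x (φ.f (m + n) x c) + φ.f 0 x (CA.mul (m + n) x c) +
        (n : F) • φ.f (m + (n - 1)) x c +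
        ∑ s ∈ range n, (n.choose s : F) • B.rmul (m + s) (φ.f (n - s) x x) c := by
  rw [hx.cocycle_apply hφ n, hx.cocycle_apply hφ 0, sum_range_succ]
  simp only [Nat.choose_self, Nat.cast_one, tsub_self, one_smul, add_zero, Nat.cast_zero, zero_tsub,
    zero_smul, zero_add, range_one, sum_singleton]
  abel

theorem lmul_one_cocycle_apply (n : ℕ) :
    B.lmul 1 x (φ.f (n + 2) x x) =
      B.lmul 0 x (φ.f (n + 3) x x) + φ.f (n + 2) x x + B.rmul (n + 2) (φ.f 1 x x) x := by
  simpa [hx.mul_add_two] using hx.cocycle_apply_eliminated hφ 1 (n + 2) x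

theorem lmul_cocycle_apply_one (n : ℕ) :
    B.lmul (n + 1) x (φ.f 1 x x) =
      B.lmul 0 x (φ.f (n + 2) x x) + (n : F) • φ.f (n + 1) x x +
        ∑ s ∈ range (n + 1),
          ((n + 1).choose s : F) • B.rmul (1 + s) (φ.f (n + 1 - s) x x) x := by
  have h := hx.cocycle_apply_eliminated hφ (n + 1) 1 x
  rw [hx.mul_one, add_comm 1 (n + 1), hx.mul_add_two, map_zero, add_zero, Nat.add_sub_cancel,
    add_comm 1 n] at h
  rw [eq_sub_of_add_eq h]
  push_cast
  module

variable [CharZero F]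

theorem exists_sub_coboundary_mem_rightUnital :
    ∃ u : M, ∀ τ : Cochain1 CA B, τ.f x = u →
      ∀ n, (φ - τ.coboundary).f (n + 1) x x ∈ B.rightUnital x := by
  set V := B.rightUnital x
  have hVr (n u) : V.mkQ (B.rmul n u x) = 0 := by simpa using hx.rmul_mem_rightUnital n u
  have hV (n) (v) (hv : v ∈ V) : B.lmul n x v ∈ V := B.lmul_mem_rightUnital hv n x
  have hcocycle : IsScalarCocycle (fun n ↦ V.mapQ V (B.lmul n x) (hV n)) (1 : F)
      fun n ↦ V.mkQ (φ.f (n + 1) x x) :=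
    { one_apply n := by
        have h := congrArg V.mkQ (hx.lmul_one_cocycle_apply hφ n)
        rwa [map_add, map_add, hVr, add_zero] at h
      apply_zero n := by
        have h := congrArg V.mkQ (hx.lmul_cocycle_apply_one hφ n)
        simp only [map_add, map_sum, map_smul, hVr, smul_zero, sum_const_zero, add_zero] at h
        rwa [add_sub_cancel_right] }
  obtain ⟨u, hu⟩ := hcocycle.exists_eq_coboundary ((hx.isWeylFamily_lmul B).mapQ hV) (.inr rfl)
  obtain ⟨u, rfl⟩ := V.mkQ_surjective u
  refine ⟨u, fun τ hτ n ↦ ?_⟩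
  rw [← V.ker_mkQ, LinearMap.mem_ker, Cochain2.sub_apply, hx.coboundary_apply_self, hτ, map_sub,
    map_add, hVr, hu, one_smul, map_sub, apply_ite V.mkQ, map_zero, add_zero]
  exact sub_self _

theorem exists_sub_coboundary_apply_eq_zero (hV : ∀ n, φ.f (n + 1) x x ∈ B.rightUnital x) :
    ∃ u : M, ∀ τ : Cochain1 CA B, τ.f x = u → ∀ n, (φ - τ.coboundary).f (n + 1) x x = 0 := by
  have hLV (n) (v) (hv : v ∈ B.rightUnital x) : B.lmul n x v ∈ B.rightUnital x :=
    B.lmul_mem_rightUnital hv n x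
  have hcocycle : IsScalarCocycle (fun n ↦ (B.lmul n x).restrict (hLV n)) (0 : F)
      fun n ↦ ⟨φ.f (n + 1) x x, hV n⟩ :=
    { one_apply n := Subtype.ext <| by
        simpa [(hV 0).2] using hx.lmul_one_cocycle_apply hφ n
      apply_zero n := Subtype.ext <| by
        have hsum : ∑ s ∈ range (n + 1),
            ((n + 1).choose s : F) • B.rmul (1 + s) (φ.f (n + 1 - s) x x) x = φ.f (n + 1) x x := by
          rw [sum_range_succ', sum_eq_zero fun s hs ↦ ?_]
          · simp [(hV n).1]
          · obtain ⟨k, rfl⟩ := Nat.exists_eq_add_of_lt (mem_range.1 hs)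
            rw [show s + k + 1 + 1 - (s + 1) = k + 1 by omega, show 1 + (s + 1) = s + 2 by omega,
              (hV k).2, smul_zero]
        have h := hx.lmul_cocycle_apply_one hφ n
        rw [hsum] at h
        simpa [add_smul, add_assoc] using h }
  obtain ⟨u, hu⟩ :=
    hcocycle.exists_eq_coboundary ((hx.isWeylFamily_lmul B).restrict hLV) (.inl rfl)
  refine ⟨u, fun τ hτ n ↦ ?_⟩
  have hun : φ.f (n + 1) x x = B.lmul (n + 1) x u := by simpa using congrArg Subtype.val (hu n)
  have hright : B.rmul (n + 1) (u : M) x = if n = 0 then (u : M) else 0 := by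
    rcases n with _ | n
    · exact u.2.1
    · exact u.2.2 n
  rw [Cochain2.sub_apply, hx.coboundary_apply_self, hτ, hun, hright, sub_add_cancel, sub_self]

end IsEulerElement

end EulerElement

namespace IsCend1x

variable {xB : ℕ → A} (hX : IsCend1x CA xB)
include hX

theorem mul_basis (k l n : ℕ) :
    CA.mul n (xB (k + 1)) (xB (l + 1)) =
      ((l + 1).descFactorial n : F) • xB (k + 1 + (l + 1) - n) :=
  hX.2.2 _ _ _ k.succ_pos l.succ_pos

theorem mul_zero_basis (k : ℕ) : CA.mul 0 (xB 1) (xB (k + 1)) = xB (k + 2) := by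
  simp [hX.mul_basis 0 k, add_comm 1]

theorem isEulerElement : IsEulerElement CA (xB 1) where
  mul_one := by simp [hX.mul_basis 0 0]
  mul_add_two n := by simp [hX.mul_basis 0 0]

theorem exists_mul_basis_eq_smul (k l n : ℕ) :
    ∃ (r : F) (j : ℕ), CA.mul n (xB (k + 1)) (xB (l + 1)) = r • xB (j + 1) := by
  rcases le_or_gt n (l + 1) with hn | hn
  · exact ⟨_, k + (l + 1 - n), by rw [hX.mul_basis]; congr 2; omega⟩
  · exact ⟨0, 0, by rw [hX.mul_basis, Nat.descFactorial_of_lt hn, Nat.cast_zero, zero_smul,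
      zero_smul]⟩

theorem exists_cochain1_apply_basis (B : ConfBimod CA M) (v : ℕ → M) :
    ∃ τ : Cochain1 CA B, ∀ k, τ.f (xB (k + 1)) = v k := by
  let b := Module.Basis.mk hX.1 hX.2.1.ge
  let τ : A →ₗ[F] M := b.constr F fun p ↦ (B.D ^ p.1) (v (p.2.1 - 1))
  have hτ (i : ℕ) (k : {k : ℕ // 1 ≤ k}) :
      τ ((CA.D ^ i) (xB k)) = (B.D ^ i) (v (k - 1)) := by
    rw [← Module.Basis.mk_apply hX.1 hX.2.1.ge (i, k)]
    exact b.constr_basis F _ _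
  have hD : τ ∘ₗ CA.D = B.D ∘ₗ τ := b.ext fun ⟨i, k⟩ ↦ by
    have hsucc := hτ (i + 1) k
    rw [pow_succ', pow_succ'] at hsucc
    rw [Module.Basis.mk_apply, LinearMap.comp_apply, LinearMap.comp_apply, hτ i k]
    exact hsucc
  exact ⟨⟨τ, LinearMap.congr_fun hD⟩, fun k ↦ hτ 0 ⟨k + 1, k.succ_pos⟩⟩

theorem eq_top_of_basis_mem {S : Submodule F A} (hD : ∀ a ∈ S, CA.D a ∈ S)
    (hS : ∀ k, xB (k + 1) ∈ S) : S = ⊤ := by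
  rw [eq_top_iff, ← hX.2.1, Submodule.span_le]
  rintro _ ⟨⟨i, k, hk⟩, rfl⟩
  obtain ⟨k, rfl⟩ := Nat.exists_eq_add_of_le' hk
  induction i with
  | zero => exact hS k
  | succ i ih => simpa [pow_succ'] using hD _ ih

theorem cochain2_apply_eq_zero {φ : Cochain2 CA B}
    (h : ∀ k l n, φ.f n (xB (k + 1)) (xB (l + 1)) = 0) (n : ℕ) (a b : A) : φ.f n a b = 0 := by
  have hright (k : ℕ) : ⨅ n, LinearMap.ker (φ.f n (xB (k + 1))) = ⊤ :=
    hX.eq_top_of_basis_mem (by simp +contextual [φ.D_right]) fun l ↦ by simp [h]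
  have hleft : ⨅ n, LinearMap.ker (φ.f n) = ⊤ := by
    refine hX.eq_top_of_basis_mem (fun a ha ↦ ?_) fun k ↦ ?_
    · simp only [Submodule.mem_iInf, LinearMap.mem_ker] at ha ⊢
      exact fun n ↦ LinearMap.ext fun b ↦ by simp [φ.D_left, ha]
    · simp only [Submodule.mem_iInf, LinearMap.mem_ker]
      exact fun n ↦ LinearMap.ker_eq_top.1 (iInf_eq_top.1 (hright k) n)
  rw [LinearMap.ker_eq_top.1 (iInf_eq_top.1 hleft n), LinearMap.zero_apply, LinearMap.zero_apply]

variable {φ : Cochain2 CA B}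

theorem exists_sub_coboundary_apply_zero_basis_eq_zero (h : ∀ n, φ.f (n + 1) (xB 1) (xB 1) = 0) :
    ∃ τ : Cochain1 CA B, (∀ n, (φ - τ.coboundary).f (n + 1) (xB 1) (xB 1) = 0) ∧
      ∀ k, (φ - τ.coboundary).f 0 (xB 1) (xB (k + 1)) = 0 := by
  let v : ℕ → M := Nat.rec 0 fun k u ↦ B.lmul 0 (xB 1) u - φ.f 0 (xB 1) (xB (k + 1))
  obtain ⟨τ, hτ⟩ := hX.exists_cochain1_apply_basis B v
  have hτx : τ.f (xB 1) = 0 := hτ 0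
  refine ⟨τ, fun n ↦ ?_, fun k ↦ ?_⟩
  · simp [Cochain2.sub_apply, hX.isEulerElement.coboundary_apply_self, hτx, h]
  · rw [Cochain2.sub_apply, τ.coboundary_apply, hX.mul_zero_basis, hτx, hτ, hτ (k + 1)]
    simp [v]

theorem cocycle_apply_eq_zero (hφ : IsCocycle φ) (hx : ∀ n, φ.f (n + 1) (xB 1) (xB 1) = 0)
    (hbasis : ∀ k, φ.f 0 (xB 1) (xB (k + 1)) = 0) (n : ℕ) (a b : A) : φ.f n a b = 0 := by
  have hprod (k l m : ℕ) : φ.f 0 (xB 1) (CA.mul m (xB (k + 1)) (xB (l + 1))) = 0 := by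
    obtain ⟨r, j, hj⟩ := hX.exists_mul_basis_eq_smul k l m
    rw [hj, map_smul, hbasis, smul_zero]
  have hleft (l n : ℕ) : φ.f n (xB 1) (xB (l + 1)) = 0 := by
    induction l generalizing n with
    | zero =>
      rcases n with _ | n
      · exact hbasis 0
      · exact hx n
    | succ l ih =>
      have hsum : ∑ s ∈ range n, (n.choose s : F) •
          B.rmul (0 + s) (φ.f (n - s) (xB 1) (xB 1)) (xB (l + 1)) = 0 := by
        refine sum_eq_zero fun s hs ↦ ?_
        obtain ⟨k, rfl⟩ := Nat.exists_eq_add_of_lt (mem_range.1 hs)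
        rw [show s + k + 1 - s = k + 1 by omega, hx, map_zero, LinearMap.zero_apply, smul_zero]
      have h := hX.isEulerElement.cocycle_apply_eliminated hφ n 0 (xB (l + 1))
      rw [hsum] at h
      simpa [ih, hX.mul_zero_basis, hprod 0 l n] using h
  refine hX.cochain2_apply_eq_zero (fun k ↦ ?_) n a b
  induction k with
  | zero => exact hleft
  | succ k ih =>
    intro l n
    have h := hφ 0 n (xB 1) (xB (k + 1)) (xB (l + 1))
    simpa [ih, hprod, hbasis, hX.mul_zero_basis] using h.symm

end IsCend1x

end ConformalCohomology

/-- **Theorem (main).** Let `M` be a conformal bimodule over the associative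
conformal algebra `Cend_{1,x}`. Then `H²(Cend_{1,x}, M) = 0`: every 2-cocycle
of `Cend_{1,x}` with values in `M` is a 2-coboundary. -/
theorem H2_Cend1x_eq_zero {F : Type*} [Field F] [CharZero F]
    {A : Type*} [AddCommGroup A] [Module F A]
    {M : Type*} [AddCommGroup M] [Module F M]
    (CA : ConfAlg F A) (xB : ℕ → A) (hX : IsCend1x CA xB)
    (B : ConfBimod CA M) (φ : Cochain2 CA B) (hφ : IsCocycle φ) :
    IsCoboundary φ := by
  have hx := hX.isEulerElement
  obtain ⟨u₁, hu₁⟩ := hx.exists_sub_coboundary_mem_rightUnital hφ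
  obtain ⟨τ₁, hτ₁⟩ := hX.exists_cochain1_apply_basis B fun _ ↦ u₁
  have hφ₁ := hφ.sub τ₁.isCocycle_coboundary
  obtain ⟨u₂, hu₂⟩ := hx.exists_sub_coboundary_apply_eq_zero hφ₁ (hu₁ τ₁ (hτ₁ 0))
  obtain ⟨τ₂, hτ₂⟩ := hX.exists_cochain1_apply_basis B fun _ ↦ u₂
  have hφ₂ := hφ₁.sub τ₂.isCocycle_coboundary
  obtain ⟨τ₃, hx₃, hbasis₃⟩ :=
    hX.exists_sub_coboundary_apply_zero_basis_eq_zero (hu₂ τ₂ (hτ₂ 0))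
  have hφ₃ := hφ₂.sub τ₃.isCocycle_coboundary
  exact .of_sub_coboundary τ₁ <| .of_sub_coboundary τ₂ <| .of_sub_coboundary τ₃ <|
    isCoboundary_of_apply_eq_zero <| hX.cocycle_apply_eq_zero hφ₃ hx₃ hbasis₃
end

section
/- The conformal algebra Cend_{1,x} splits off in every singular extension: for every associative conformal algebra B and surjective homomorphism of conformal algebras σ : B → Cend_{1,x} such that (Ker σ) ∘ₙ (Ker σ) = 0 for all n ∈ ℤ₊, there exists a subalgebra A' ⊆ B such that σ restricts to an isomorphism of A' onto Cend_{1,x} and B = A' ⊕ Ker σ as H-modules. -/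
open Finset

/-! Lift the generator `x` to some `e ∈ B`, and let `φₙ ∈ K = ker σ` measure the failure of the
relations `e ∘₁ e = e`, `e ∘ₙ e = 0` (`n ≥ 2`); only finitely many `φₙ` are nonzero. Since `K` is a
square-zero ideal, replacing `e` by `e + u` with `u ∈ K` adds to `φₙ` the linear term
`e ∘ₙ u + u ∘ₙ e - δₙ₁ u`. The point is that `u = φ₁` turns it into `κₙ φₙ + e ∘₀ φₙ₊₁`, `κₙ ≠ 0`,
modulo the submodule `V` of those `v` with `v ∘₁ e = v` and `v ∘ₙ e = 0` for `n ≥ 2`. So the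
multiple `u = -κ_N⁻¹ φ₁` kills the last nonzero `φ_N` modulo `V`, and descending on `N` brings every
`φₙ` into `K ∩ V`. There the same identity holds exactly, with `κₙ = n`, and a second descent makes
every `φₙ` vanish. The relations then make the `F[D]`-span of the powers of `e` a subalgebra, and
`σ` carries these powers to the basis `x, x², …`. -/

namespace ConfAlg

variable {F : Type*} [Field F] {B : Type*} [AddCommGroup B] [Module F B]

section Products

variable (CB : ConfAlg F B)

theorem mul_zero_mul (m : ℕ) (a b c : B) :
    CB.mul m (CB.mul 0 a b) c = CB.mul 0 a (CB.mul m b c) := by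
  simp [CB.assoc]

theorem mul_mul (n m : ℕ) (a b c : B) :
    CB.mul n a (CB.mul m b c) =
      ∑ s ∈ range (n + 1), (n.choose s : F) • CB.mul (m + s) (CB.mul (n - s) a b) c := by
  -- With `g k = a ∘ₖ (b ∘_{m+n-k} c)`, associativity says that `(a ∘ⱼ b) ∘_{m+n-j} c` is the
  -- `j`-th difference of `g` at `0`, so the claim is Newton's interpolation formula for `g n`.
  let g : ℕ → B := fun k => CB.mul k a (CB.mul (m + n - k) b c)
  have hΔ : ∀ j ≤ n, (fwdDiff 1)^[j] g 0 = CB.mul (m + n - j) (CB.mul j a b) c := by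
    intro j hj
    rw [fwdDiff_iter_eq_sum_shift, CB.assoc, ← sum_range_reflect]
    refine sum_congr rfl fun s hs => ?_
    have hsj : s ≤ j := Nat.lt_succ_iff.1 (mem_range.1 hs)
    have hidx : m + n - (j - s) = m + n - j + s := by omega
    simp only [g, ← Int.cast_smul_eq_zsmul F, smul_eq_mul, mul_one, zero_add,
      Nat.add_sub_cancel, Nat.sub_sub_self hsj, Nat.choose_symm hsj, hidx]
    push_cast
    rfl
  calc CB.mul n a (CB.mul m b c)
      = g (0 + n • 1) := by simp [g]
    _ = ∑ j ∈ range (n + 1), n.choose j • (fwdDiff 1)^[j] g 0 := shift_eq_sum_fwdDiff_iter 1 g n 0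
    _ = ∑ s ∈ range (n + 1), n.choose (n - s) • (fwdDiff 1)^[n - s] g 0 := by
        rw [← sum_range_reflect]; rfl
    _ = _ := sum_congr rfl fun s hs => by
        have hsn : s ≤ n := Nat.lt_succ_iff.1 (mem_range.1 hs)
        have hidx : m + n - (n - s) = m + s := by omega
        rw [hΔ _ (Nat.sub_le n s), Nat.choose_symm hsn, hidx, Nat.cast_smul_eq_nsmul]

/-- The failure of `e` to act on `v` from the right as `x` acts on `x` in `Cend_{1,x}`, where
`v ∘₁ x = v` and `v ∘ₙ x = 0` for `n ≥ 2`; the product `∘₀` is unconstrained, whence the value `0`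
at `n = 0`. -/
def rightDefect (e : B) : ℕ → Module.End F B
  | 0 => 0
  | 1 => (CB.mul 1).flip e - 1
  | n + 2 => (CB.mul (n + 2)).flip e

/-- The failure of `e` to satisfy the relations `e ∘₁ e = e` and `e ∘ₙ e = 0`, `n ≥ 2`, of the
generator `x` of `Cend_{1,x}`. -/
def defect (e : B) (n : ℕ) : B :=
  CB.rightDefect e n e

/-- The linearization of `defect` at `e`, meaningful for `n ≠ 0`: the value at `(x, x)` of the
Hochschild coboundary of a 1-cochain sending `x` to the argument. -/
def coboundary (e : B) (n : ℕ) : Module.End F B :=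
  CB.mul n e + CB.rightDefect e n

/-- The elements on which `e` acts from the right as `x` acts on `x^k` in `Cend_{1,x}`. -/
def rightUnital (e : B) : Submodule F B :=
  ⨅ n, LinearMap.ker (CB.rightDefect e n)

end Products

section Defect

variable {CB : ConfAlg F B} {e v : B} {n : ℕ}

theorem mem_rightUnital : v ∈ CB.rightUnital e ↔ ∀ n, CB.rightDefect e n v = 0 := by
  simp [rightUnital]

@[simp]
theorem defect_zero : CB.defect e 0 = 0 := rfl

theorem mul_eq_rightDefect_add (hn : n ≠ 0) (e v : B) :
    CB.mul n v e = CB.rightDefect e n v + if n = 1 then v else 0 := by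
  match n with
  | 1 => simp [rightDefect]
  | n + 2 => simp [rightDefect]

theorem mul_self_eq_defect_add (hn : n ≠ 0) (e : B) :
    CB.mul n e e = CB.defect e n + if n = 1 then e else 0 :=
  mul_eq_rightDefect_add hn e e

theorem exists_defect_eq_zero_of_lt (CB : ConfAlg F B) (e : B) :
    ∃ N, ∀ n, N < n → CB.defect e n = 0 := by
  obtain ⟨N, hN⟩ := CB.locality e e
  refine ⟨N + 1, fun n hn => ?_⟩
  have h := mul_self_eq_defect_add (CB := CB) (n := n) (by omega) e
  rwa [hN n (by omega), if_neg (by omega), add_zero, eq_comm] at h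

theorem rightDefect_mul_zero (e a v : B) (n : ℕ) :
    CB.rightDefect e n (CB.mul 0 a v) = CB.mul 0 a (CB.rightDefect e n v) := by
  match n with
  | 0 => simp [rightDefect]
  | 1 => simp [rightDefect, mul_zero_mul]
  | n + 2 => simp [rightDefect, mul_zero_mul]

theorem mul_zero_mem_rightUnital (a : B) (hv : v ∈ CB.rightUnital e) :
    CB.mul 0 a v ∈ CB.rightUnital e := by
  rw [mem_rightUnital] at hv ⊢
  simp [rightDefect_mul_zero, hv]

theorem rightDefect_mul (hn : n ≠ 0) (j : ℕ) (v : B) :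
    CB.rightDefect e n (CB.mul j v e) =
      ∑ s ∈ range (j + 1),
        ((-1 : F) ^ s * (j.choose s : F)) • CB.mul (j - s) v (CB.defect e (n + s)) := by
  rw [← add_left_inj (if n = 1 then CB.mul j v e else 0), ← mul_eq_rightDefect_add hn, CB.assoc,
    sum_range_succ', sum_range_succ']
  have htail : ∀ s, CB.mul (n + (s + 1)) e e = CB.defect e (n + (s + 1)) := fun s => by
    rw [mul_self_eq_defect_add (by omega), if_neg (by omega), add_zero]
  simp only [htail]
  rw [mul_self_eq_defect_add (n := n + 0) hn]
  split_ifs <;> simp_all [add_assoc]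

theorem mul_mul_self (e b : B) (n m : ℕ) :
    CB.mul n e (CB.mul m e b) =
      CB.mul 0 e (CB.mul (m + n) e b) + (n : F) • CB.mul (m + n - 1) e b +
        ∑ s ∈ range (n + 1), (n.choose s : F) • CB.mul (m + s) (CB.defect e (n - s)) b := by
  rw [mul_mul]
  cases n with
  | zero => simp [mul_zero_mul]
  | succ n =>
    have hhigh : ∀ s ∈ range n, CB.mul (n + 1 - s) e e = CB.defect e (n + 1 - s) := by
      intro s hs
      have := mem_range.1 hs
      rw [mul_self_eq_defect_add (by omega), if_neg (by omega), add_zero]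
    have hone : CB.mul 1 e e = CB.defect e 1 + e := mul_self_eq_defect_add one_ne_zero e
    simp only [sum_range_succ _ (n + 1), sum_range_succ _ n]
    rw [sum_congr rfl fun s hs => by rw [hhigh s hs]]
    simp only [hone, defect_zero, Nat.choose_self, Nat.choose_succ_self_right, Nat.add_sub_cancel,
      Nat.add_sub_cancel_left, Nat.sub_self, Nat.cast_add, Nat.cast_one, map_add, map_zero,
      LinearMap.add_apply, LinearMap.zero_apply, smul_add, smul_zero, add_zero, one_smul,
      mul_zero_mul, ← add_assoc]
    abel

theorem mul_defect_one (hn : n ≠ 0) (e : B) :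
    CB.mul n e (CB.defect e 1) =
      CB.mul 0 e (CB.defect e (n + 1)) + ((n : F) - 1) • CB.defect e n +
        ∑ s ∈ range (n + 1), (n.choose s : F) • CB.mul (1 + s) (CB.defect e (n - s)) e := by
  have hone : CB.defect e 1 = CB.mul 1 e e - e := rfl
  have hsucc : CB.mul (n + 1) e e = CB.defect e (n + 1) := by
    rw [mul_self_eq_defect_add n.succ_ne_zero, if_neg (by omega), add_zero]
  have hself : ((n : F) - 1) • CB.mul n e e = ((n : F) - 1) • CB.defect e n := by
    rw [mul_self_eq_defect_add hn]
    split_ifs with h <;> simp [h]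
  rw [hone, map_sub, mul_mul_self, add_comm 1 n, hsucc, ← hself, Nat.add_sub_cancel, sub_smul,
    one_smul]
  abel

theorem coboundary_defect_one (hn : n ≠ 0) (hφ : ∀ n, CB.defect e n ∈ CB.rightUnital e) :
    CB.coboundary e n (CB.defect e 1) =
      (n : F) • CB.defect e n + CB.mul 0 e (CB.defect e (n + 1)) := by
  have hR : ∀ k j, CB.rightDefect e k (CB.defect e j) = 0 := fun k j => mem_rightUnital.1 (hφ j) k
  have hsum : ∑ s ∈ range (n + 1), (n.choose s : F) • CB.mul (1 + s) (CB.defect e (n - s)) e =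
      CB.defect e n := by
    rw [sum_eq_single 0 (fun s _ hs => ?_) (by simp), mul_eq_rightDefect_add (by omega), hR]
    · simp
    · rw [mul_eq_rightDefect_add (by omega), hR, if_neg (by omega), add_zero, smul_zero]
  rw [coboundary, LinearMap.add_apply, mul_defect_one hn, hsum, hR, sub_smul, one_smul]
  abel

end Defect

/-- `K` is an ideal of the conformal algebra all of whose products `K ∘ₙ K` vanish. -/
structure IsSquareZeroIdeal (CB : ConfAlg F B) (K : Submodule F B) : Prop where
  mul_mem_left : ∀ (n : ℕ) (b : B) {m : B}, m ∈ K → CB.mul n b m ∈ K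
  mul_mem_right : ∀ (n : ℕ) {m : B} (b : B), m ∈ K → CB.mul n m b ∈ K
  mul_eq_zero : ∀ (n : ℕ) {a b : B}, a ∈ K → b ∈ K → CB.mul n a b = 0

namespace IsSquareZeroIdeal

variable {CB : ConfAlg F B} {K : Submodule F B} (hK : IsSquareZeroIdeal CB K) {e u : B}
include hK

theorem rightDefect_add {v : B} (hv : v ∈ K) (hu : u ∈ K) (n : ℕ) :
    CB.rightDefect (e + u) n v = CB.rightDefect e n v := by
  match n with
  | 0 => rfl
  | 1 => simp [rightDefect, hK.mul_eq_zero 1 hv hu]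
  | n + 2 => simp [rightDefect, hK.mul_eq_zero (n + 2) hv hu]

theorem inf_rightUnital_add (hu : u ∈ K) :
    K ⊓ CB.rightUnital (e + u) = K ⊓ CB.rightUnital e := by
  ext v
  simp only [Submodule.mem_inf, mem_rightUnital]
  exact and_congr_right fun hv => by simp only [hK.rightDefect_add hv hu]

theorem defect_add {n : ℕ} (hn : n ≠ 0) (hu : u ∈ K) :
    CB.defect (e + u) n = CB.defect e n + CB.coboundary e n u := by
  have hφ : ∀ b, CB.defect b n = CB.mul n b b - if n = 1 then b else 0 := fun b =>
    eq_sub_of_add_eq (mul_self_eq_defect_add hn b).symm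
  have hδ : CB.rightDefect e n u = CB.mul n u e - if n = 1 then u else 0 :=
    eq_sub_of_add_eq (mul_eq_rightDefect_add hn e u).symm
  simp only [coboundary, LinearMap.add_apply, hφ, hδ, map_add, hK.mul_eq_zero n hu hu]
  split_ifs <;> abel

theorem mul_mem_rightUnital (he : ∀ n, CB.defect e n ∈ K) (j : ℕ) {m : B} (hm : m ∈ K) :
    CB.mul j m e ∈ CB.rightUnital e := by
  refine mem_rightUnital.2 fun n => ?_
  rcases eq_or_ne n 0 with rfl | hn
  · rfl
  · rw [rightDefect_mul hn]
    exact sum_eq_zero fun s _ => by rw [hK.mul_eq_zero _ hm (he _), smul_zero]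

theorem coboundary_defect_one_sub_mem (he : ∀ n, CB.defect e n ∈ K) {n : ℕ} (hn : n ≠ 0) :
    CB.coboundary e n (CB.defect e 1) -
      ((if n = 1 then -1 else (n : F) - 1) • CB.defect e n + CB.mul 0 e (CB.defect e (n + 1))) ∈
        K ⊓ CB.rightUnital e := by
  have hR : ∀ j k, CB.mul j (CB.defect e k) e ∈ K ⊓ CB.rightUnital e := fun j k =>
    ⟨hK.mul_mem_right j e (he k), hK.mul_mem_rightUnital he j (he k)⟩
  have hsplit : CB.coboundary e n (CB.defect e 1) -
      ((if n = 1 then -1 else (n : F) - 1) • CB.defect e n + CB.mul 0 e (CB.defect e (n + 1))) =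
        (∑ s ∈ range (n + 1), (n.choose s : F) • CB.mul (1 + s) (CB.defect e (n - s)) e) +
          CB.mul n (CB.defect e 1) e := by
    rw [coboundary, LinearMap.add_apply, mul_defect_one hn, mul_eq_rightDefect_add hn]
    split_ifs with h
    · subst h
      simp only [Nat.cast_one, sub_self, zero_smul, neg_smul, one_smul]
      abel
    · abel
  rw [hsplit]
  exact add_mem (sum_mem fun s _ => Submodule.smul_mem _ _ (hR _ _)) (hR _ _)

theorem defect_add_smul_defect_one_sub_mem {U : Submodule F B} {n : ℕ} {k : F} (hn : n ≠ 0)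
    (hφ : CB.defect e 1 ∈ K)
    (hU : CB.coboundary e n (CB.defect e 1) -
      (k • CB.defect e n + CB.mul 0 e (CB.defect e (n + 1))) ∈ U) (c : F) :
    CB.defect (e + c • CB.defect e 1) n -
      ((1 + c * k) • CB.defect e n + c • CB.mul 0 e (CB.defect e (n + 1))) ∈ U := by
  convert U.smul_mem c hU using 1
  rw [hK.defect_add hn (K.smul_mem c hφ), map_smul]
  module

-- Adding `-(κ N)⁻¹ • defect e 1` to `e` multiplies the top defect, at `n = N`, by `1 - κ N / κ N`
-- modulo `U` and creates nothing above it.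
theorem exists_add_defect_mem {W U : Submodule F B} {κ : ℕ → F} (hUW : U ≤ W) (hWK : W ≤ K)
    (hU : ∀ b, ∀ v ∈ U, CB.mul 0 b v ∈ U) (hW : ∀ b, ∀ v ∈ W, CB.mul 0 b v ∈ W)
    (hκ : ∀ n ≠ 0, κ n ≠ 0)
    (hstep : ∀ u ∈ K, (∀ n, CB.defect (e + u) n ∈ W) → ∀ n ≠ 0,
      CB.coboundary (e + u) n (CB.defect (e + u) 1) -
        (κ n • CB.defect (e + u) n + CB.mul 0 (e + u) (CB.defect (e + u) (n + 1))) ∈ U)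
    (he : ∀ n, CB.defect e n ∈ W) :
    ∃ u ∈ K, ∀ n, CB.defect (e + u) n ∈ U := by
  suffices descent : ∀ N, ∀ u ∈ K, (∀ n, CB.defect (e + u) n ∈ W) →
      (∀ n, N < n → CB.defect (e + u) n ∈ U) → ∃ u ∈ K, ∀ n, CB.defect (e + u) n ∈ U by
    obtain ⟨N, hN⟩ := exists_defect_eq_zero_of_lt CB e
    exact descent N 0 K.zero_mem (by simpa using he) fun n hn => by simp [hN n hn]
  intro N
  induction N with
  | zero =>
    refine fun u hu _ htop => ⟨u, hu, fun n => ?_⟩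
    rcases n.eq_zero_or_pos with rfl | hn
    · exact U.zero_mem
    · exact htop n hn
  | succ N ih =>
    intro u hu huW htop
    let c := -(κ (N + 1))⁻¹
    have hφK : CB.defect (e + u) 1 ∈ K := hWK (huW 1)
    have hφ := fun n hn =>
      hK.defect_add_smul_defect_one_sub_mem hn hφK (hstep u hu huW n hn) c
    rw [add_assoc] at hφ
    refine ih (u + c • CB.defect (e + u) 1) (K.add_mem hu (K.smul_mem c hφK))
      (fun n => ?_) (fun n hn => ?_)
    · rcases eq_or_ne n 0 with rfl | hn
      · exact W.zero_mem
      · exact (W.sub_mem_iff_left (W.add_mem (W.smul_mem _ (huW n))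
          (W.smul_mem _ (hW _ _ (huW _))))).1 (hUW (hφ n hn))
    · have hmain : (1 + c * κ n) • CB.defect (e + u) n ∈ U := by
        rcases eq_or_ne n (N + 1) with rfl | hne
        · simp [c, hκ (N + 1) N.succ_ne_zero]
        · exact U.smul_mem _ (htop n (by omega))
      exact (U.sub_mem_iff_left (U.add_mem hmain
        (U.smul_mem _ (hU _ _ (htop _ (by omega)))))).1 (hφ n (by omega))

variable [CharZero F]

theorem exists_add_defect_mem_rightUnital (he : ∀ n, CB.defect e n ∈ K) :
    ∃ u ∈ K, ∀ n, CB.defect (e + u) n ∈ K ⊓ CB.rightUnital (e + u) := by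
  obtain ⟨u, hu, hφ⟩ := hK.exists_add_defect_mem (U := K ⊓ CB.rightUnital e)
    (κ := fun n => if n = 1 then -1 else (n : F) - 1) inf_le_left le_rfl
    (fun b v hv => ⟨hK.mul_mem_left 0 b hv.1, mul_zero_mem_rightUnital b hv.2⟩)
    (fun b v hv => hK.mul_mem_left 0 b hv)
    (fun n _ => by
      split_ifs with h
      · simp
      · exact sub_ne_zero.2 (Nat.cast_ne_one.2 h))
    (fun u hu huK n hn => by
      rw [← hK.inf_rightUnital_add hu]
      exact hK.coboundary_defect_one_sub_mem huK hn) he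
  exact ⟨u, hu, by rwa [hK.inf_rightUnital_add hu]⟩

theorem exists_add_defect_eq_zero_of_mem_rightUnital
    (he : ∀ n, CB.defect e n ∈ K ⊓ CB.rightUnital e) :
    ∃ u ∈ K, ∀ n, CB.defect (e + u) n = 0 := by
  obtain ⟨u, hu, hφ⟩ := hK.exists_add_defect_mem (U := ⊥) (κ := fun n => (n : F)) bot_le inf_le_left
    (fun b v hv => by simp [(Submodule.mem_bot F).1 hv])
    (fun b v hv => ⟨hK.mul_mem_left 0 b hv.1, mul_zero_mem_rightUnital b hv.2⟩)
    (fun n hn => Nat.cast_ne_zero.2 hn)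
    (fun u hu huV n hn => by
      rw [← hK.inf_rightUnital_add hu] at huV
      rw [coboundary_defect_one hn fun n => (huV n).2, sub_self]
      exact zero_mem _) he
  exact ⟨u, hu, fun n => (Submodule.mem_bot F).1 (hφ n)⟩

theorem exists_add_defect_eq_zero (he : ∀ n, CB.defect e n ∈ K) :
    ∃ u ∈ K, ∀ n, CB.defect (e + u) n = 0 := by
  obtain ⟨u, hu, huV⟩ := hK.exists_add_defect_mem_rightUnital he
  obtain ⟨w, hw, h⟩ := hK.exists_add_defect_eq_zero_of_mem_rightUnital huV
  exact ⟨u + w, K.add_mem hu hw, by simpa only [add_assoc] using h⟩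

end IsSquareZeroIdeal

section DSpan

variable {ι : Type*}

/-- The `F[D]`-submodule generated by the family `v`. -/
def dSpan (CB : ConfAlg F B) (v : ι → B) : Submodule F B :=
  Submodule.span F (Set.range fun p : ℕ × ι => (CB.D ^ p.1) (v p.2))

variable {CB : ConfAlg F B} {v : ι → B}

theorem mem_dSpan (i : ι) : v i ∈ CB.dSpan v :=
  Submodule.subset_span ⟨(0, i), rfl⟩

theorem D_mem_dSpan {b : B} (hb : b ∈ CB.dSpan v) : CB.D b ∈ CB.dSpan v := by
  suffices CB.dSpan v ≤ (CB.dSpan v).comap CB.D from this hb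
  refine Submodule.span_le.2 ?_
  rintro _ ⟨⟨j, i⟩, rfl⟩
  exact Submodule.subset_span ⟨(j + 1, i), by simp [pow_succ']⟩

theorem dSpan_le {W : Submodule F B} (hv : ∀ i, v i ∈ W) (hD : ∀ b ∈ W, CB.D b ∈ W) :
    CB.dSpan v ≤ W := by
  refine Submodule.span_le.2 ?_
  rintro _ ⟨⟨j, i⟩, rfl⟩
  induction j with
  | zero => exact hv i
  | succ j ih =>
    simp only [pow_succ', Module.End.mul_apply]
    exact hD _ ih

theorem mul_zero_mem_dSpan {a b : B} (hv : ∀ i, CB.mul 0 a (v i) ∈ CB.dSpan v)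
    (hb : b ∈ CB.dSpan v) : CB.mul 0 a b ∈ CB.dSpan v :=
  dSpan_le (W := (CB.dSpan v).comap (CB.mul 0 a)) hv
    (fun b hb => by simpa [CB.D_right] using D_mem_dSpan hb) hb

theorem mul_mem_dSpan (hv : ∀ n i j, CB.mul n (v i) (v j) ∈ CB.dSpan v) (n : ℕ) {a b : B}
    (ha : a ∈ CB.dSpan v) (hb : b ∈ CB.dSpan v) : CB.mul n a b ∈ CB.dSpan v := by
  have hright : ∀ i, CB.dSpan v ≤ ⨅ n, (CB.dSpan v).comap (CB.mul n (v i)) := fun i =>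
    dSpan_le (fun j => by simpa using fun n => hv n i j) fun b hb => by
      simp only [Submodule.mem_iInf, Submodule.mem_comap, CB.D_right] at hb ⊢
      exact fun n => add_mem (D_mem_dSpan (hb n)) (Submodule.smul_mem _ _ (hb _))
  have hleft : CB.dSpan v ≤ ⨅ n, (CB.dSpan v).comap ((CB.mul n).flip b) :=
    dSpan_le (fun i => by simpa using (Submodule.mem_iInf _).1 (hright i hb)) fun a ha => by
      simp only [Submodule.mem_iInf, Submodule.mem_comap, LinearMap.flip_apply, CB.D_left] at ha ⊢
      exact fun n => neg_mem (Submodule.smul_mem _ _ (ha _))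
  exact (Submodule.mem_iInf _).1 (hleft ha) n

end DSpan

section Power

variable {CB : ConfAlg F B} {e : B}

/-- The power `e^k` with respect to `∘₀`, for `k ≥ 1`; the value at `k = 0` is junk. -/
def power (CB : ConfAlg F B) (e : B) (k : ℕ) : B :=
  (CB.mul 0 e ^ (k - 1)) e

theorem power_one (CB : ConfAlg F B) (e : B) : CB.power e 1 = e := rfl

theorem power_succ {k : ℕ} (hk : 1 ≤ k) : CB.power e (k + 1) = CB.mul 0 e (CB.power e k) := by
  obtain ⟨j, rfl⟩ := Nat.exists_eq_add_of_le' hk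
  simp [power, pow_succ']

/-- The `F[D]`-submodule generated by the powers of `e`. -/
def powerSpan (CB : ConfAlg F B) (e : B) : Submodule F B :=
  CB.dSpan fun k : {k : ℕ // 1 ≤ k} => CB.power e k

theorem power_mem_powerSpan {k : ℕ} (hk : 1 ≤ k) : CB.power e k ∈ CB.powerSpan e :=
  mem_dSpan (⟨k, hk⟩ : {k : ℕ // 1 ≤ k})

theorem mul_zero_mem_powerSpan {b : B} (hb : b ∈ CB.powerSpan e) :
    CB.mul 0 e b ∈ CB.powerSpan e :=
  mul_zero_mem_dSpan (fun k => power_succ (CB := CB) (e := e) k.2 ▸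
    power_mem_powerSpan (Nat.le_succ_of_le k.2)) hb

theorem mul_power_mem_powerSpan (he : ∀ n, CB.defect e n = 0) {k : ℕ} (hk : 1 ≤ k) (n : ℕ) :
    CB.mul n e (CB.power e k) ∈ CB.powerSpan e := by
  induction k, hk using Nat.le_induction generalizing n with
  | base =>
    have hmem : e ∈ CB.powerSpan e := power_mem_powerSpan le_rfl
    rw [power_one]
    rcases eq_or_ne n 0 with rfl | hn
    · exact mul_zero_mem_powerSpan hmem
    · rw [mul_self_eq_defect_add hn, he, zero_add]
      split_ifs
      exacts [hmem, zero_mem _]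
  | succ k hk ih =>
    rw [power_succ hk, mul_mul_self]
    simp only [he, map_zero, LinearMap.zero_apply, smul_zero, sum_const_zero, add_zero]
    exact add_mem (mul_zero_mem_powerSpan (ih _)) (Submodule.smul_mem _ _ (ih _))

theorem power_mul_power_mem_powerSpan (he : ∀ n, CB.defect e n = 0) {k l : ℕ} (hk : 1 ≤ k)
    (hl : 1 ≤ l) (n : ℕ) : CB.mul n (CB.power e k) (CB.power e l) ∈ CB.powerSpan e := by
  induction k, hk using Nat.le_induction with
  | base => exact mul_power_mem_powerSpan he hl n
  | succ k hk ih =>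
    rw [power_succ hk, mul_zero_mul]
    exact mul_zero_mem_powerSpan ih

theorem mul_mem_powerSpan (he : ∀ n, CB.defect e n = 0) (n : ℕ) {a b : B}
    (ha : a ∈ CB.powerSpan e) (hb : b ∈ CB.powerSpan e) : CB.mul n a b ∈ CB.powerSpan e :=
  mul_mem_dSpan (fun n k l => power_mul_power_mem_powerSpan he k.2 l.2 n) n ha hb

end Power

section Hom

variable {A : Type*} [AddCommGroup A] [Module F A] {CA : ConfAlg F A} {CB : ConfAlg F B}
  {σ : B →ₗ[F] A}

/-- `σ` is a homomorphism of conformal algebras. -/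
structure IsHom (CB : ConfAlg F B) (CA : ConfAlg F A) (σ : B →ₗ[F] A) : Prop where
  map_D : ∀ b, σ (CB.D b) = CA.D (σ b)
  map_mul : ∀ n a b, σ (CB.mul n a b) = CA.mul n (σ a) (σ b)

namespace IsHom

variable (hσ : IsHom CB CA σ)
include hσ

theorem map_D_pow (j : ℕ) (b : B) : σ ((CB.D ^ j) b) = (CA.D ^ j) (σ b) := by
  induction j with
  | zero => rfl
  | succ j ih => simp only [pow_succ', Module.End.mul_apply, hσ.map_D, ih]

theorem map_defect (e : B) (n : ℕ) : σ (CB.defect e n) = CA.defect (σ e) n := by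
  match n with
  | 0 => exact map_zero σ
  | 1 => simp [defect, rightDefect, hσ.map_mul]
  | n + 2 => simp [defect, rightDefect, hσ.map_mul]

theorem map_power (e : B) {k : ℕ} (hk : 1 ≤ k) : σ (CB.power e k) = CA.power (σ e) k := by
  induction k, hk using Nat.le_induction with
  | base => rfl
  | succ k hk ih => rw [power_succ hk, power_succ hk, hσ.map_mul, ih]

theorem isSquareZeroIdeal_ker
    (hker : ∀ n, ∀ a ∈ LinearMap.ker σ, ∀ b ∈ LinearMap.ker σ, CB.mul n a b = 0) :
    IsSquareZeroIdeal CB (LinearMap.ker σ) where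
  mul_mem_left n b m hm := by simp [hσ.map_mul, LinearMap.mem_ker.1 hm]
  mul_mem_right n m b hm := by simp [hσ.map_mul, LinearMap.mem_ker.1 hm]
  mul_eq_zero n a b ha hb := hker n a ha b hb

theorem isCompl_dSpan_ker {ι : Type*} {v : ι → B} (hσsurj : Function.Surjective σ)
    (hli : LinearIndependent F fun p : ℕ × ι => (CA.D ^ p.1) (σ (v p.2)))
    (hspan : CA.dSpan (fun i => σ (v i)) = ⊤) : IsCompl (CB.dSpan v) (LinearMap.ker σ) := by
  have hcomp : (σ ∘ fun p : ℕ × ι => (CB.D ^ p.1) (v p.2)) =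
      fun p : ℕ × ι => (CA.D ^ p.1) (σ (v p.2)) :=
    funext fun p => hσ.map_D_pow p.1 (v p.2)
  refine ⟨Submodule.range_ker_disjoint (hcomp ▸ hli), codisjoint_iff.2 ?_⟩
  rw [← LinearMap.map_eq_top_iff (LinearMap.range_eq_top.2 hσsurj), dSpan, Submodule.map_span,
    ← Set.range_comp, hcomp]
  exact hspan

end IsHom

end Hom

end ConfAlg

namespace IsCend1x

variable {F : Type*} [Field F] {A : Type*} [AddCommGroup A] [Module F A] {CA : ConfAlg F A}
  {xB : ℕ → A} (hX : IsCend1x CA xB)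
include hX

theorem defect_eq_zero (n : ℕ) : CA.defect (xB 1) n = 0 := by
  rcases eq_or_ne n 0 with rfl | hn
  · rfl
  · rw [← add_left_inj (if n = 1 then xB 1 else 0), ← ConfAlg.mul_self_eq_defect_add hn,
      hX.2.2 1 1 n le_rfl le_rfl, zero_add]
    split_ifs with h
    · simp [h]
    · rw [Nat.descFactorial_of_lt (by omega), Nat.cast_zero, zero_smul]

theorem power_eq {k : ℕ} (hk : 1 ≤ k) : CA.power (xB 1) k = xB k := by
  induction k, hk using Nat.le_induction with
  | base => rfl
  | succ k hk ih =>
    rw [ConfAlg.power_succ hk, ih, hX.2.2 1 k 0 le_rfl hk]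
    simp [add_comm]

theorem isCompl_powerSpan_ker {B : Type*} [AddCommGroup B] [Module F B] {CB : ConfAlg F B}
    {σ : B →ₗ[F] A} (hσ : CB.IsHom CA σ) (hσsurj : Function.Surjective σ) {e : B}
    (he : σ e = xB 1) : IsCompl (CB.powerSpan e) (LinearMap.ker σ) := by
  have hpow : (fun k : {k : ℕ // 1 ≤ k} => σ (CB.power e k)) =
      fun k : {k : ℕ // 1 ≤ k} => xB k :=
    funext fun k => by rw [hσ.map_power e k.2, he, hX.power_eq k.2]
  refine hσ.isCompl_dSpan_ker hσsurj ?_ (hpow ▸ hX.2.1)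
  convert hX.1 using 3 with p
  exact congrFun hpow p.2

end IsCend1x

/-- **Theorem.** `Cend_{1,x}` splits off in every singular extension: for every
associative conformal algebra `B` and surjective conformal-algebra homomorphism
`σ : B → Cend_{1,x}` whose kernel squares to zero (for all `∘ₙ`), there is a
conformal subalgebra `S ⊆ B` such that `σ` restricts to an isomorphism of `S`
onto `Cend_{1,x}` and `B = S ⊕ ker σ` as `F[D]`-modules. -/
theorem Cend1x_splits_in_singular_extensions {F : Type*} [Field F] [CharZero F]
    {A : Type*} [AddCommGroup A] [Module F A]
    {B : Type*} [AddCommGroup B] [Module F B]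
    (CA : ConfAlg F A) (xB : ℕ → A) (hX : IsCend1x CA xB)
    (CB : ConfAlg F B) (σ : B →ₗ[F] A)
    (hσD : ∀ b : B, σ (CB.D b) = CA.D (σ b))
    (hσmul : ∀ (n : ℕ) (a b : B), σ (CB.mul n a b) = CA.mul n (σ a) (σ b))
    (hσsurj : Function.Surjective σ)
    (hsing : ∀ n : ℕ, ∀ a ∈ LinearMap.ker σ, ∀ b ∈ LinearMap.ker σ, CB.mul n a b = 0) :
    ∃ S : Submodule F B,
      (∀ b ∈ S, CB.D b ∈ S) ∧
      (∀ n : ℕ, ∀ a ∈ S, ∀ b ∈ S, CB.mul n a b ∈ S) ∧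
      Function.Bijective (fun s : S => σ s.1) ∧
      S ⊓ LinearMap.ker σ = ⊥ ∧ S ⊔ LinearMap.ker σ = ⊤ := by
  have hσ : CB.IsHom CA σ := ⟨hσD, hσmul⟩
  have hK := hσ.isSquareZeroIdeal_ker hsing
  obtain ⟨e, he⟩ := hσsurj (xB 1)
  obtain ⟨u, hu, hφ⟩ := hK.exists_add_defect_eq_zero (e := e) fun n => by
    rw [LinearMap.mem_ker, hσ.map_defect, he, hX.defect_eq_zero]
  have hx : σ (e + u) = xB 1 := by rw [map_add, he, LinearMap.mem_ker.1 hu, add_zero]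
  have hcompl := hX.isCompl_powerSpan_ker hσ hσsurj hx
  exact ⟨CB.powerSpan (e + u), fun _ => ConfAlg.D_mem_dSpan,
    fun n _ ha _ hb => ConfAlg.mul_mem_powerSpan hφ n ha hb,
    ⟨LinearMap.injective_domRestrict_iff.2 hcompl.disjoint,
      (LinearMap.surjective_domRestrict_iff hσsurj).2 hcompl.codisjoint⟩,
    hcompl.inf_eq_bot, hcompl.sup_eq_top⟩
end

section
/- Let φ be a 2-cocycle of Cend_{1,x} with values in a conformal bimodule M. If φ₁(x, x) = 0 and φ₀(x, x^l) = 0 for every l ≥ 1, then φ = 0, i.e. φ_s(a, b) = 0 for all a, b ∈ Cend_{1,x} and all s ∈ ℤ₊. -/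
open Finset

/-!
Write `uₙ = φₙ(x, x)`, `L = x ∘₀ ·` and `Rₖ = · ∘ₖ x`. Since `x ∘₁ x = x` and `x ∘ₙ x = 0` for
`n ≥ 2`, the cocycle condition for `(x, x, x)` gives
`(1 - n) uₙ = L uₙ₊₁ + ∑ₛ binom(n, s) Rₛ₊₁ uₙ₋ₛ`.
By locality `uₙ = 0` for large `n`, so one may descend in `n`. The operators `Rₖ`, `k ≥ 2`, kill
the sum, whence `Rₖ uₙ = 0`; then `R₁`, which is idempotent, gives `-n R₁ uₙ = L R₁ uₙ₊₁`, whence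
`R₁ uₙ = 0`; finally `(1 - n) uₙ = L uₙ₊₁`, whence `uₙ = 0`. The values `u₀` and `u₁`, where the
scalar `-n` or `1 - n` vanishes, are the ones assumed to be zero.

The set of `b` with `φₙ(x, b) = 0` for all `n`, and then the set of `a` with `φₙ(a, ·) = 0` for all
`n`, is an `H`-submodule containing `x` and stable under `x ∘₀ ·`, hence the whole algebra.
-/

theorem eq_top_of_mem_invtSubmodule {R V ι : Type*} [Semiring R] [AddCommMonoid V] [Module R V]
    {T : Module.End R V} {v : ι → V}
    (hv : Submodule.span R (Set.range fun p : ℕ × ι => (T ^ p.1) (v p.2)) = ⊤)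
    {p : Submodule R V} (hp : p ∈ T.invtSubmodule) (hvp : ∀ i, v i ∈ p) : p = ⊤ := by
  rw [← top_le_iff, ← hv, Submodule.span_le]
  rintro _ ⟨⟨n, i⟩, rfl⟩
  exact Module.End.pow_apply_mem_of_forall_mem n hp _ (hvp i)

section

variable {F : Type*} [Field F] {A : Type*} [AddCommGroup A] [Module F A]
  {M : Type*} [AddCommGroup M] [Module F M] {CA : ConfAlg F A} {B : ConfBimod CA M}
  {φ : Cochain2 CA B} {xB : ℕ → A} {a b c x : A}

namespace IsCend1x

theorem mul_one_self (hX : IsCend1x CA xB) : CA.mul 1 (xB 1) (xB 1) = xB 1 := by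
  simpa using hX.2.2 1 1 1 le_rfl le_rfl

theorem mul_self_eq_zero_of_two_le (hX : IsCend1x CA xB) (n : ℕ) (hn : 2 ≤ n) :
    CA.mul n (xB 1) (xB 1) = 0 := by
  simp [hX.2.2 1 1 n le_rfl le_rfl, Nat.descFactorial_eq_zero_iff_lt.2 hn]

theorem mul_zero_pow_apply (hX : IsCend1x CA xB) (l : ℕ) :
    (CA.mul 0 (xB 1) ^ l) (xB 1) = xB (l + 1) := by
  induction l with
  | zero => simp
  | succ l ih =>
    rw [pow_succ', Module.End.mul_apply, ih]
    simpa [add_comm 1] using hX.2.2 1 (l + 1) 0 le_rfl (by lia)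

theorem span_D_pow_mul_zero_pow_eq_top (hX : IsCend1x CA xB) :
    Submodule.span F (Set.range fun p : ℕ × ℕ =>
      (CA.D ^ p.1) ((CA.mul 0 (xB 1) ^ p.2) (xB 1))) = ⊤ := by
  rw [← top_le_iff, ← hX.2.1]
  refine Submodule.span_mono ?_
  rintro _ ⟨⟨i, k, hk⟩, rfl⟩
  exact ⟨(i, k - 1), by simp [hX.mul_zero_pow_apply, Nat.sub_add_cancel hk]⟩

end IsCend1x

namespace ConfBimod

theorem rmul_rmul_eq_zero (B : ConfBimod CA M) {k : ℕ} (hab : ∀ n, k ≤ n → CA.mul n a b = 0)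
    (m : ℕ) (u : M) : B.rmul k (B.rmul m u a) b = 0 := by
  rw [B.assoc_uaa]
  exact sum_eq_zero fun s _ => by rw [hab _ (by lia), map_zero, smul_zero]

theorem rmul_rmul_eq_rmul_mul (B : ConfBimod CA M) {k : ℕ}
    (hab : ∀ n, k < n → CA.mul n a b = 0) (m : ℕ) (u : M) :
    B.rmul k (B.rmul m u a) b = B.rmul m u (CA.mul k a b) := by
  rw [B.assoc_uaa, sum_range_succ', sum_eq_zero fun s _ => by
    rw [hab _ (by lia), map_zero, smul_zero]]
  simp

theorem rmul_lmul_zero (B : ConfBimod CA M) (k : ℕ) (a : A) (u : M) (b : A) :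
    B.rmul k (B.lmul 0 a u) b = B.lmul 0 a (B.rmul k u b) := by
  simp [B.assoc_aua]

end ConfBimod

namespace Cochain2

theorem map_eq_zero_of_map_succ (φ : Cochain2 CA B) {M' : Type*} [AddCommGroup M'] [Module F M']
    (T : M →ₗ[F] M') (hT : ∀ n, T (φ.f (n + 1) a b) = 0 → T (φ.f n a b) = 0) (n : ℕ) :
    T (φ.f n a b) = 0 := by
  obtain ⟨N, hN⟩ := φ.loc a b
  exact Nat.strong_decreasing_induction ⟨N, fun m hm => by rw [hN m hm.le, map_zero]⟩
    (fun m ih => hT m (ih _ m.lt_succ_self)) n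

theorem sum_choose_smul_apply_mul (φ : Cochain2 CA B) (hab : ∀ k, 2 ≤ k → CA.mul k a b = 0)
    (n m : ℕ) (c : A) :
    ∑ s ∈ range (n + 1), (n.choose s : F) • φ.f (m + 1 + s) (CA.mul (n - s) a b) c =
      φ.f (m + 1 + n) (CA.mul 0 a b) c + (n : F) • φ.f (m + n) (CA.mul 1 a b) c := by
  rcases n with _ | n
  · simp
  · rw [sum_range_succ, sum_range_succ, sum_eq_zero fun s hs => by
      rw [hab _ (by have := mem_range.1 hs; lia), map_zero, LinearMap.zero_apply, smul_zero]]
    simp [add_comm, add_left_comm]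

theorem ker_apply_zero_mem_invtSubmodule (φ : Cochain2 CA B) (a : A) :
    LinearMap.ker (φ.f 0 a) ∈ Module.End.invtSubmodule CA.D := by
  intro b hb
  have hb : φ.f 0 a b = 0 := hb
  simp [φ.D_right, hb]

/-- The right kernel of `φ` at `a`: all `b` with `φₙ(a, b) = 0` for every `n`. It is stable under
`D`, so to show that `φₙ(a, ·) = 0` for all `n` it is enough to test on generators over `H`. -/
def rightKer (φ : Cochain2 CA B) (a : A) : Submodule F A := ⨅ n, LinearMap.ker (φ.f n a)

/-- The left kernel of `φ`: all `a` with `φₙ(a, ·) = 0` for every `n`. It is stable under `D`, so to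
show that `φ = 0` it is enough to test on generators over `H`. -/
def leftKer (φ : Cochain2 CA B) : Submodule F A := ⨅ n, LinearMap.ker (φ.f n)

theorem mem_rightKer : b ∈ φ.rightKer a ↔ ∀ n, φ.f n a b = 0 := by
  simp [rightKer]

theorem mem_leftKer : a ∈ φ.leftKer ↔ ∀ n b, φ.f n a b = 0 := by
  simp [leftKer, LinearMap.ext_iff]

theorem rightKer_mem_invtSubmodule (φ : Cochain2 CA B) (a : A) :
    φ.rightKer a ∈ Module.End.invtSubmodule CA.D := by
  intro b hb
  rw [mem_rightKer] at hb
  simp [mem_rightKer, φ.D_right, hb]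

theorem leftKer_mem_invtSubmodule (φ : Cochain2 CA B) :
    φ.leftKer ∈ Module.End.invtSubmodule CA.D := by
  intro a ha
  rw [mem_leftKer] at ha
  simp [mem_leftKer, φ.D_left, ha]

end Cochain2

namespace IsCocycle

theorem apply_mul_zero_left (hφ : IsCocycle φ) (n : ℕ) (a b c : A) :
    φ.f n (CA.mul 0 a b) c =
      B.lmul 0 a (φ.f n b c) + φ.f 0 a (CA.mul n b c) - B.rmul n (φ.f 0 a b) c := by
  rw [hφ 0 n a b c]
  simp

theorem mul_zero_mem_leftKer (hφ : IsCocycle φ) (ha : a ∈ φ.leftKer) (hb : b ∈ φ.leftKer) :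
    CA.mul 0 a b ∈ φ.leftKer := by
  rw [Cochain2.mem_leftKer] at *
  simp [hφ.apply_mul_zero_left, ha, hb]

section Generator

variable (hφ : IsCocycle φ) (h0 : ∀ b, φ.f 0 x b = 0)
  (hx1 : CA.mul 1 x x = x) (hx : ∀ n, 2 ≤ n → CA.mul n x x = 0)

include hφ h0

theorem apply_mul_zero_left_of_apply_zero (n : ℕ) (b c : A) :
    φ.f n (CA.mul 0 x b) c = B.lmul 0 x (φ.f n b c) := by
  simp [hφ.apply_mul_zero_left, h0]

include hx1 hx

theorem mul_zero_mem_rightKer (hself : x ∈ φ.rightKer x) (hc : c ∈ φ.rightKer x) :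
    CA.mul 0 x c ∈ φ.rightKer x := by
  rw [Cochain2.mem_rightKer] at *
  have hxx (k n : ℕ) : φ.f n (CA.mul k x x) c = 0 := by
    match k with
    | 0 => rw [hφ.apply_mul_zero_left_of_apply_zero h0, hc, map_zero]
    | 1 => rw [hx1, hc]
    | k + 2 => rw [hx _ (by lia), map_zero, LinearMap.zero_apply]
  intro n
  simpa [hself, hc, hxx] using hφ n 0 x x c

variable (h1 : φ.f 1 x x = 0)

include h1

theorem one_sub_smul_apply_self (n : ℕ) :
    (1 - n : F) • φ.f n x x = B.lmul 0 x (φ.f (n + 1) x x) +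
      ∑ s ∈ range (n + 1), (n.choose s : F) • B.rmul (s + 1) (φ.f (n - s) x x) x := by
  have hcocycle := hφ n 1 x x x
  have hsum := φ.sum_choose_smul_apply_mul hx n 0 x
  simp only [zero_add] at hsum
  rw [h1, map_zero, zero_add, hx1] at hcocycle
  simp only [smul_add, sum_add_distrib] at hcocycle
  rw [hsum, hφ.apply_mul_zero_left_of_apply_zero h0, hx1] at hcocycle
  simp only [add_comm 1] at hcocycle
  rw [sub_smul, one_smul, sub_eq_iff_eq_add]
  exact hcocycle.trans (add_right_comm _ _ _)

variable [CharZero F]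

theorem rmul_apply_self_eq_zero_of_two_le {k : ℕ} (hk : 2 ≤ k) (n : ℕ) :
    B.rmul k (φ.f n x x) x = 0 := by
  refine φ.map_eq_zero_of_map_succ ((B.rmul k).flip x) (fun n ih => ?_) n
  simp only [LinearMap.flip_apply] at ih ⊢
  rcases eq_or_ne n 1 with rfl | hn
  · simp [h1]
  have hRR : ∀ m u, B.rmul k (B.rmul m u x) x = 0 :=
    B.rmul_rmul_eq_zero fun j hj => hx j (hk.trans hj)
  have hrec := congrArg ((B.rmul k).flip x) (hφ.one_sub_smul_apply_self h0 hx1 hx h1 n)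
  simp only [map_add, map_smul, map_sum, LinearMap.flip_apply, hRR, B.rmul_lmul_zero, ih,
    map_zero, smul_zero, sum_const_zero, add_zero] at hrec
  exact (smul_eq_zero.1 hrec).resolve_left (sub_ne_zero.2 (mod_cast hn.symm))

theorem one_sub_smul_apply_self_eq_add (n : ℕ) :
    (1 - n : F) • φ.f n x x =
      B.lmul 0 x (φ.f (n + 1) x x) + B.rmul 1 (φ.f n x x) x := by
  rw [hφ.one_sub_smul_apply_self h0 hx1 hx h1, sum_range_succ', sum_eq_zero fun s _ => by
    rw [hφ.rmul_apply_self_eq_zero_of_two_le h0 hx1 hx h1 (by lia), smul_zero]]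
  simp

theorem rmul_one_apply_self_eq_zero (n : ℕ) : B.rmul 1 (φ.f n x x) x = 0 := by
  refine φ.map_eq_zero_of_map_succ ((B.rmul 1).flip x) (fun n ih => ?_) n
  simp only [LinearMap.flip_apply] at ih ⊢
  rcases eq_or_ne n 0 with rfl | hn
  · simp [h0]
  have hRR (u : M) : B.rmul 1 (B.rmul 1 u x) x = B.rmul 1 u x := by
    rw [B.rmul_rmul_eq_rmul_mul hx, hx1]
  have hrec := congrArg ((B.rmul 1).flip x) (hφ.one_sub_smul_apply_self_eq_add h0 hx1 hx h1 n)
  simp only [map_add, map_smul, LinearMap.flip_apply, hRR, B.rmul_lmul_zero, ih, map_zero,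
    zero_add] at hrec
  rw [sub_smul, one_smul, sub_eq_self] at hrec
  exact (smul_eq_zero.1 hrec).resolve_left (mod_cast hn)

theorem apply_self_eq_zero (n : ℕ) : φ.f n x x = 0 := by
  refine φ.map_eq_zero_of_map_succ LinearMap.id (fun n ih => ?_) n
  simp only [LinearMap.id_apply] at ih ⊢
  rcases eq_or_ne n 1 with rfl | hn
  · exact h1
  have hrec := hφ.one_sub_smul_apply_self_eq_add h0 hx1 hx h1 n
  rw [ih, hφ.rmul_one_apply_self_eq_zero h0 hx1 hx h1, map_zero, add_zero] at hrec
  exact (smul_eq_zero.1 hrec).resolve_left (sub_ne_zero.2 (mod_cast hn.symm))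

end Generator

end IsCocycle

theorem cocycle_eq_zero_of_values_zero_general [CharZero F] (hφ : IsCocycle φ)
    (hx1 : CA.mul 1 x x = x) (hx : ∀ n, 2 ≤ n → CA.mul n x x = 0)
    (hspan : Submodule.span F
      (Set.range fun p : ℕ × ℕ => (CA.D ^ p.1) ((CA.mul 0 x ^ p.2) x)) = ⊤)
    (h1 : φ.f 1 x x = 0) (h0 : ∀ l : ℕ, φ.f 0 x ((CA.mul 0 x ^ l) x) = 0) :
    ∀ (s : ℕ) (a b : A), φ.f s a b = 0 := by
  have hker : LinearMap.ker (φ.f 0 x) = ⊤ :=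
    eq_top_of_mem_invtSubmodule (v := fun l => (CA.mul 0 x ^ l) x) hspan
      (φ.ker_apply_zero_mem_invtSubmodule x) h0
  have h0 (b : A) : φ.f 0 x b = 0 := LinearMap.mem_ker.1 (hker.ge Submodule.mem_top)
  have eq_top {p : Submodule F A} (hD : p ∈ Module.End.invtSubmodule CA.D)
      (hmul : ∀ b ∈ p, CA.mul 0 x b ∈ p) (hxp : x ∈ p) : p = ⊤ :=
    eq_top_of_mem_invtSubmodule (v := fun l => (CA.mul 0 x ^ l) x) hspan hD fun l =>
      Module.End.pow_apply_mem_of_forall_mem l hmul x hxp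
  have hself : x ∈ φ.rightKer x :=
    Cochain2.mem_rightKer.2 (hφ.apply_self_eq_zero h0 hx1 hx h1)
  have hright : φ.rightKer x = ⊤ := eq_top (φ.rightKer_mem_invtSubmodule x)
    (fun _ => hφ.mul_zero_mem_rightKer h0 hx1 hx hself) hself
  have hx_left : x ∈ φ.leftKer := Cochain2.mem_leftKer.2 fun n b =>
    Cochain2.mem_rightKer.1 (hright.ge Submodule.mem_top) n
  have hleft : φ.leftKer = ⊤ := eq_top φ.leftKer_mem_invtSubmodule
    (fun _ => hφ.mul_zero_mem_leftKer hx_left) hx_left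
  intro s a b
  exact Cochain2.mem_leftKer.1 (hleft.ge Submodule.mem_top) s b

end

/-- **Lemma 2.** Let `φ` be a 2-cocycle of `Cend_{1,x}` with values in a conformal
bimodule `M`. If `φ₁(x, x) = 0` and `φ₀(x, x^l) = 0` for every `l ≥ 1`, then `φ = 0`. -/
theorem cocycle_eq_zero_of_values_zero {F : Type*} [Field F] [CharZero F]
    {A : Type*} [AddCommGroup A] [Module F A]
    {M : Type*} [AddCommGroup M] [Module F M]
    (CA : ConfAlg F A) (xB : ℕ → A) (hX : IsCend1x CA xB)
    (B : ConfBimod CA M) (φ : Cochain2 CA B) (hφ : IsCocycle φ)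
    (h1 : φ.f 1 (xB 1) (xB 1) = 0)
    (h2 : ∀ l : ℕ, 1 ≤ l → φ.f 0 (xB 1) (xB l) = 0) :
    ∀ (s : ℕ) (a b : A), φ.f s a b = 0 :=
  cocycle_eq_zero_of_values_zero_general hφ hX.mul_one_self hX.mul_self_eq_zero_of_two_le
    hX.span_D_pow_mul_zero_pow_eq_top h1 fun l => by rw [hX.mul_zero_pow_apply, h2 _ l.succ_pos]
end

section
/- Let φ be a 2-cocycle of Cend_{1,x} with values in a conformal bimodule M. Write φ_m = φ_m(x, x) ∈ M, and let L_m, R_m : M → M denote the operators L_m(u) = x ∘_m u and R_m(u) = u ∘_m x. Then for every m ≥ 1: L₀^m φ_{m+1} = (L₁ − m)(L₁ − (m−1))⋯(L₁ − 2) L₁ φ₁ − Σ_{s=1}^{m} (L₁ − m)⋯(L₁ − (s+1)) L₀^{s−1} R_s φ₁, where a product of the form (L₁ − m)⋯(L₁ − (s+1)) is interpreted as the identity operator when s = m (and the product (L₁ − m)⋯(L₁ − 2) is the identity when m = 1). -/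
open Finset

/-!
Let `e ∘₁ e = e` and `e ∘ₙ e = 0` for `n ≥ 2`, as holds for `e = x`. Associativity at `e ∘₁ e` gives
`L₀ L₁ = (L₁ - 1) L₀`, so `L₀ ^ k` shifts `L₁` by `-k`. The `∘₀`- and `∘₁`-components of the cocycle
identity both contain the terms involving `e ∘₀ e` and `φ₀`; eliminating these terms leaves
`L₀ φ₂ = L₁ φ₁ - R₁ φ₁` and `L₀ φₘ₊₁ = (L₁ - 1) φₘ - Rₘ φ₁` for `m ≥ 2`. Applying a power of `L₀`
turns this into a first-order linear recurrence for `L₀ ^ m φₘ₊₁`, with coefficients `L₁ - m` and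
inhomogeneous terms `L₀ ^ (m - 1) Rₘ φ₁`.
-/

theorem semiconjBy_pow_sub_natCast {R : Type*} [Ring R] {a b : R} (h : SemiconjBy a b (b - 1))
    (k : ℕ) : SemiconjBy (a ^ k) b (b - k) := by
  induction k with
  | zero => simp
  | succ k ih =>
    rw [pow_succ', Nat.cast_succ, add_comm, ← sub_sub]
    exact (h.sub_right (Nat.commute_cast a k)).mul_left ih

theorem eq_prod_smul_sub_sum_of_recurrence {S M : Type*} [CommMonoid S] [AddCommGroup M]
    [DistribMulAction S M] {c : ℕ → S} {y z : ℕ → M} {v : M} {k m : ℕ} (hkm : k ≤ m)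
    (hbase : y k = v - z k) (hrec : ∀ n, k ≤ n → y (n + 1) = c (n + 1) • y n - z (n + 1)) :
    y m = (∏ j ∈ Icc (k + 1) m, c j) • v -
      ∑ s ∈ Icc k m, (∏ j ∈ Icc (s + 1) m, c j) • z s := by
  induction m, hkm using Nat.le_induction with
  | base => simpa using hbase
  | succ m hkm ih =>
    have hprod : ∀ s ≤ m, ∀ w : M, (∏ j ∈ Icc (s + 1) (m + 1), c j) • w =
        c (m + 1) • (∏ j ∈ Icc (s + 1) m, c j) • w := fun s hs w => by
      rw [prod_Icc_succ_top (by lia), mul_comm, mul_smul]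
    have hsum : ∑ s ∈ Icc k (m + 1), (∏ j ∈ Icc (s + 1) (m + 1), c j) • z s =
        c (m + 1) • ∑ s ∈ Icc k m, (∏ j ∈ Icc (s + 1) m, c j) • z s + z (m + 1) := by
      rw [sum_Icc_succ_top (by lia), smul_sum,
        sum_congr rfl fun s hs => hprod s (mem_Icc.mp hs).2 (z s)]
      simp
    rw [hrec m hkm, ih, hprod k hkm, hsum, smul_sub, sub_sub]

section ConformalAlgebra

variable {F : Type*} [Field F] {A : Type*} [AddCommGroup A] [Module F A] {CA : ConfAlg F A}

theorem IsCend1x.mul_one_generator {xB : ℕ → A} (hX : IsCend1x CA xB) {k : ℕ} (hk : 1 ≤ k) :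
    CA.mul 1 (xB k) (xB 1) = xB k := by
  simp [hX.2.2 k 1 1 hk le_rfl]

theorem IsCend1x.mul_eq_zero_of_lt {xB : ℕ → A} (hX : IsCend1x CA xB) {k l n : ℕ} (hk : 1 ≤ k)
    (hl : 1 ≤ l) (hln : l < n) : CA.mul n (xB k) (xB l) = 0 := by
  simp [hX.2.2 k l n hk hl, Nat.descFactorial_of_lt hln]

variable {M : Type*} [AddCommGroup M] [Module F M] {B : ConfBimod CA M}

theorem ConfBimod.lmul_mul_one (B : ConfBimod CA M) (n : ℕ) (a b : A) :
    B.lmul n (CA.mul 1 a b) = B.lmul 1 a ∘ₗ B.lmul n b - B.lmul 0 a ∘ₗ B.lmul (n + 1) b := by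
  ext u
  simp [B.assoc_aau, sum_range_succ, sub_eq_add_neg]

theorem ConfBimod.semiconjBy_lmul_zero_lmul_one (B : ConfBimod CA M) {e : A}
    (he : CA.mul 1 e e = e) :
    SemiconjBy (B.lmul 0 e : Module.End F M) (B.lmul 1 e) (B.lmul 1 e - 1) := by
  have hcomm : (B.lmul 0 e : Module.End F M) =
      B.lmul 1 e * B.lmul 0 e - B.lmul 0 e * B.lmul 1 e :=
    (congrArg (B.lmul 0) he).symm.trans (B.lmul_mul_one 0 e e)
  rw [SemiconjBy, sub_mul, one_mul, eq_sub_iff_add_eq, add_comm]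
  exact eq_sub_iff_add_eq.mp hcomm

namespace IsCocycle

variable {φ : Cochain2 CA B} {e : A}

theorem lmul_zero_apply_succ (hφ : IsCocycle φ) (m : ℕ) (a b c : A) :
    B.lmul 0 a (φ.f (m + 1) b c) =
      B.lmul 1 a (φ.f m b c) + φ.f 1 a (CA.mul m b c) - φ.f 0 a (CA.mul (m + 1) b c) -
        φ.f m (CA.mul 1 a b) c - B.rmul m (φ.f 1 a b) c := by
  have hzero : B.lmul 0 a (φ.f (m + 1) b c) + φ.f 0 a (CA.mul (m + 1) b c) =
      φ.f (m + 1) (CA.mul 0 a b) c + B.rmul (m + 1) (φ.f 0 a b) c := by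
    simpa using hφ 0 (m + 1) a b c
  have hone : B.lmul 1 a (φ.f m b c) + φ.f 1 a (CA.mul m b c) =
      φ.f m (CA.mul 1 a b) c + B.rmul m (φ.f 1 a b) c +
        (φ.f (m + 1) (CA.mul 0 a b) c + B.rmul (m + 1) (φ.f 0 a b) c) := by
    simpa [sum_range_succ] using hφ 1 m a b c
  rw [hone, ← hzero]
  abel

theorem lmul_zero_apply_two (hφ : IsCocycle φ) (he : CA.mul 1 e e = e)
    (he₂ : CA.mul 2 e e = 0) :
    B.lmul 0 e (φ.f 2 e e) = B.lmul 1 e (φ.f 1 e e) - B.rmul 1 (φ.f 1 e e) e := by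
  simp [hφ.lmul_zero_apply_succ 1, he, he₂]

theorem lmul_zero_apply_succ_of_two_le (hφ : IsCocycle φ) (he : CA.mul 1 e e = e)
    (hloc : ∀ n, 2 ≤ n → CA.mul n e e = 0) {m : ℕ} (hm : 2 ≤ m) :
    B.lmul 0 e (φ.f (m + 1) e e) =
      (B.lmul 1 e - 1 : Module.End F M) (φ.f m e e) - B.rmul m (φ.f 1 e e) e := by
  simp [hφ.lmul_zero_apply_succ m, he, hloc m hm, hloc (m + 1) (by lia)]

theorem lmul_zero_pow_apply_add_two (hφ : IsCocycle φ) (he : CA.mul 1 e e = e)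
    (hloc : ∀ n, 2 ≤ n → CA.mul n e e = 0) {m : ℕ} (hm : 1 ≤ m) :
    ((B.lmul 0 e : Module.End F M) ^ (m + 1)) (φ.f (m + 2) e e) =
      (B.lmul 1 e - ((m + 1 : ℕ) : Module.End F M))
          (((B.lmul 0 e : Module.End F M) ^ m) (φ.f (m + 1) e e)) -
        ((B.lmul 0 e : Module.End F M) ^ m) (B.rmul (m + 1) (φ.f 1 e e) e) := by
  have hshift : SemiconjBy ((B.lmul 0 e : Module.End F M) ^ m) (B.lmul 1 e - 1)
      (B.lmul 1 e - ((m + 1 : ℕ) : Module.End F M)) := by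
    rw [Nat.cast_succ, ← sub_sub]
    exact (semiconjBy_pow_sub_natCast (B.semiconjBy_lmul_zero_lmul_one he) m).sub_right
      (SemiconjBy.one_right _)
  rw [pow_succ, Module.End.mul_apply, hφ.lmul_zero_apply_succ_of_two_le he hloc (by lia), map_sub,
    ← Module.End.mul_apply, hshift.eq, Module.End.mul_apply]

end IsCocycle

theorem L0_pow_phi_formula_general {φ : Cochain2 CA B} (hφ : IsCocycle φ) {e : A}
    (he : CA.mul 1 e e = e) (hloc : ∀ n, 2 ≤ n → CA.mul n e e = 0) {m : ℕ} (hm : 1 ≤ m) :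
    ((B.lmul 0 e : Module.End F M) ^ m) (φ.f (m + 1) e e) =
      (Polynomial.aeval (B.lmul 1 e : Module.End F M)
          (∏ j ∈ Icc 2 m, (Polynomial.X - Polynomial.C (j : F))) * B.lmul 1 e) (φ.f 1 e e) -
      ∑ s ∈ Icc 1 m,
        (Polynomial.aeval (B.lmul 1 e : Module.End F M)
            (∏ j ∈ Icc (s + 1) m, (Polynomial.X - Polynomial.C (j : F))) *
          (B.lmul 0 e : Module.End F M) ^ (s - 1) * (B.rmul s).flip e) (φ.f 1 e e) := by
  -- `F[X]` acts on `M` through `X ↦ L₁`.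
  let := Module.compHom M (Polynomial.aeval (R := F) (B.lmul 1 e : Module.End F M)).toRingHom
  refine eq_prod_smul_sub_sum_of_recurrence (S := Polynomial F)
    (c := fun j => Polynomial.X - Polynomial.C (j : F))
    (y := fun n => ((B.lmul 0 e : Module.End F M) ^ n) (φ.f (n + 1) e e))
    (z := fun s => ((B.lmul 0 e : Module.End F M) ^ (s - 1)) (B.rmul s (φ.f 1 e e) e)) hm ?_ ?_
  · simpa using hφ.lmul_zero_apply_two he (hloc 2 le_rfl)
  · intro n hn
    have hcoeff : Polynomial.aeval (B.lmul 1 e : Module.End F M)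
        (Polynomial.X - Polynomial.C ((n + 1 : ℕ) : F) : Polynomial F) =
        B.lmul 1 e - ((n + 1 : ℕ) : Module.End F M) := by simp
    have hsmul (u : M) : (Polynomial.X - Polynomial.C ((n + 1 : ℕ) : F) : Polynomial F) • u =
        (B.lmul 1 e - ((n + 1 : ℕ) : Module.End F M)) u := LinearMap.congr_fun hcoeff u
    rw [hsmul]
    exact hφ.lmul_zero_pow_apply_add_two he hloc hn

end ConformalAlgebra

/-- **Lemma 4.** Let `φ` be a 2-cocycle of `Cend_{1,x}` with values in a conformal
bimodule `M`, `φ_m = φ_m(x,x)`, `L_m u = x ∘ₘ u`, `R_m u = u ∘ₘ x`. Then for all `m ≥ 1`: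
`L₀^m φ_{m+1} = (L₁−m)⋯(L₁−2)·L₁ φ₁ − Σ_{s=1}^m (L₁−m)⋯(L₁−(s+1))·L₀^{s−1} R_s φ₁`,
where the products of the commuting operators `(L₁ − j)` are expressed by
evaluating the polynomials `∏ⱼ (X − j)` at `L₁` (empty products are the identity). -/
theorem L0_pow_phi_formula {F : Type*} [Field F] [CharZero F]
    {A : Type*} [AddCommGroup A] [Module F A]
    {M : Type*} [AddCommGroup M] [Module F M]
    (CA : ConfAlg F A) (xB : ℕ → A) (hX : IsCend1x CA xB)
    (B : ConfBimod CA M) (φ : Cochain2 CA B) (hφ : IsCocycle φ)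
    (m : ℕ) (hm : 1 ≤ m) :
    ((B.lmul 0 (xB 1) : Module.End F M) ^ m) (φ.f (m + 1) (xB 1) (xB 1)) =
      (Polynomial.aeval (B.lmul 1 (xB 1) : Module.End F M)
          (∏ j ∈ Finset.Icc 2 m, (Polynomial.X - Polynomial.C (j : F))) *
        B.lmul 1 (xB 1)) (φ.f 1 (xB 1) (xB 1)) -
      ∑ s ∈ Finset.Icc 1 m,
        (Polynomial.aeval (B.lmul 1 (xB 1) : Module.End F M)
            (∏ j ∈ Finset.Icc (s + 1) m, (Polynomial.X - Polynomial.C (j : F))) *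
          (B.lmul 0 (xB 1) : Module.End F M) ^ (s - 1) *
          (B.rmul s).flip (xB 1)) (φ.f 1 (xB 1) (xB 1)) :=
  L0_pow_phi_formula_general hφ (hX.mul_one_generator le_rfl)
    (fun _ hn => hX.mul_eq_zero_of_lt le_rfl le_rfl hn) hm
end

section
/- Suppose the endomorphisms Lₙ satisfy L₁Lₘ = L₀L_{m+1} + Lₘ for all m ∈ ℤ₊. Then for every k ≥ 1 the identity L₀^{k−1}L_k = L₁(L₁ − 1)(L₁ − 2)⋯(L₁ − (k−1)) holds in End(M), where L₁ − j denotes L₁ − j·id. -/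
/-!
The relation for `m = 0` says `L₀ L₁ = (L₁ - 1) L₀`: moving `L₀` to the right past `L₁` lowers
`L₁` by `1`, so moving `L₀ ^ n` lowers it by `n`. The relation for `m = n + 1`, written as
`L₀ Lₙ₊₂ = (L₁ - 1) Lₙ₊₁` and multiplied on the left by `L₀ ^ n`, therefore gives the factor
`L₁ - (n + 1)` by which `L₀ ^ (n + 1) Lₙ₊₂` differs from `L₀ ^ n Lₙ₊₁`.
-/

section Ring

variable {A : Type*} [Ring A]

theorem semiconjBy_pow_sub_nsmul {a b c : A} (hab : SemiconjBy a b (b - c)) (hac : Commute a c)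
    (n : ℕ) : SemiconjBy (a ^ n) b (b - n • c) := by
  induction n with
  | zero => simp
  | succ n ih =>
    have past_sub : SemiconjBy (a ^ n) (b - c) (b - (n + 1) • c) := by
      simpa only [succ_nsmul, sub_sub] using ih.sub_right (hac.pow_left n)
    simpa only [pow_succ] using past_sub.mul_left hab

variable {L : ℕ → A} (hL : ∀ m : ℕ, L 1 * L m = L 0 * L (m + 1) + L m)
include hL

theorem L0_mul_L_succ (m : ℕ) : L 0 * L (m + 1) = (L 1 - 1) * L m := by
  rw [sub_mul, one_mul, hL m, add_sub_cancel_right]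

theorem semiconjBy_L0_pow_L1 (n : ℕ) : SemiconjBy (L 0 ^ n) (L 1) (L 1 - n) := by
  simpa only [nsmul_one] using
    semiconjBy_pow_sub_nsmul (L0_mul_L_succ hL 0) (Commute.one_right (L 0)) n

theorem L0_pow_succ_mul_L (n : ℕ) :
    L 0 ^ (n + 1) * L (n + 2) = (L 1 - (n + 1 : ℕ)) * (L 0 ^ n * L (n + 1)) := by
  have past_sub_one : L 0 ^ n * (L 1 - 1) = (L 1 - (n + 1 : ℕ)) * L 0 ^ n := by
    simpa only [Nat.cast_succ, sub_sub] using
      ((semiconjBy_L0_pow_L1 hL n).sub_right (SemiconjBy.one_right _)).eq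
  calc
    L 0 ^ (n + 1) * L (n + 2) = L 0 ^ n * (L 0 * L (n + 2)) := by rw [pow_succ, mul_assoc]
    _ = L 0 ^ n * (L 1 - 1) * L (n + 1) := by rw [L0_mul_L_succ hL (n + 1), mul_assoc]
    _ = (L 1 - (n + 1 : ℕ)) * (L 0 ^ n * L (n + 1)) := by rw [past_sub_one, mul_assoc]

open Polynomial in
theorem L0_pow_mul_L_eq_prod_general {R : Type*} [CommRing R] [Algebra R A] (n : ℕ) :
    L 0 ^ n * L (n + 1) = aeval (L 1) (∏ j ∈ Finset.range (n + 1), (X - C (j : R))) := by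
  induction n with
  | zero => simp
  | succ n ih =>
    rw [L0_pow_succ_mul_L hL, ih, Finset.prod_range_succ_comm _ (n + 1), map_mul]
    simp only [map_sub, aeval_X, map_natCast]

end Ring

/-- Suppose the endomorphisms `Lₙ` of an `F`-vector space `M` (`char F = 0`) satisfy
`L₁Lₘ = L₀L_{m+1} + Lₘ` for all `m ∈ ℤ₊`. Then for every `k ≥ 1`,
`L₀^{k−1} L_k = L₁(L₁ − 1)⋯(L₁ − (k−1))`, where `L₁ − j` means `L₁ − j·id` and
the product of the commuting factors is expressed by evaluating the polynomial
`∏_{j=0}^{k-1} (X − j)` at `L₁`. -/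
theorem L0_pow_mul_L_eq_prod {F : Type*} [Field F] [CharZero F]
    {M : Type*} [AddCommGroup M] [Module F M]
    (L : ℕ → Module.End F M)
    (hL : ∀ m : ℕ, L 1 * L m = L 0 * L (m + 1) + L m) :
    ∀ k : ℕ, 1 ≤ k →
      L 0 ^ (k - 1) * L k =
        Polynomial.aeval (L 1) (∏ j ∈ Finset.range k, (Polynomial.X - Polynomial.C (j : F))) := by
  intro k hk
  obtain ⟨n, rfl⟩ := Nat.exists_eq_add_of_le' hk
  exact L0_pow_mul_L_eq_prod_general hL n
end

section
/- Suppose the endomorphisms Lₙ satisfy L₁Lₘ = L₀L_{m+1} + Lₘ for all m ∈ ℤ₊, and that for every v ∈ M there exists N with L_k v = 0 for all k ≥ N. Let V ⊆ M be a finite-dimensional subspace with L₁V ⊆ V. Then V decomposes as a direct sum of L₁-invariant subspaces V = V₀ ⊕ V₁ ⊕ ⋯ ⊕ V_k, where L₁v = i·v for all v ∈ V_i; equivalently, the restriction of L₁ to V is diagonalizable and all of its eigenvalues are nonnegative integers. -/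
/-!
The relation `L₁L₀ = L₀(L₁ + 1)` gives `L₁L₀ⁿ = L₀ⁿ(L₁ + n)`, and with it the remaining relations
yield, by induction on `n`, the identity `(L₁ - n) ⋯ (L₁ - 1)L₁ = L₀ⁿL_{n+1}`. Hence every `v`
killed by some `L_{n+1}` is killed by a polynomial in `L₁` whose roots `0, …, n` are distinct.
If `ℓ₀, …, ℓₙ` are the Lagrange basis polynomials at these nodes, then `v = ∑ᵢ ℓᵢ(L₁)v` with
`ℓᵢ(L₁)v` an eigenvector for the eigenvalue `i`, lying in every `L₁`-invariant subspace that
contains `v`.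
-/

open Polynomial Lagrange Module.End

theorem mul_pow_eq_pow_mul_add_natCast {R : Type*} [Semiring R] {a b : R}
    (h : b * a = a * b + a) (n : ℕ) : b * a ^ n = a ^ n * (b + n) := by
  induction n with
  | zero => simp
  | succ n ih =>
    calc b * a ^ (n + 1) = a ^ n * (b * a + n * a) := by
          rw [pow_succ, ← mul_assoc, ih, mul_assoc, add_mul]
      _ = a ^ n * (a * (b + (n + 1 : ℕ))) := by
          rw [h, (Nat.cast_commute n a).eq, Nat.cast_succ]
          noncomm_ring
      _ = a ^ (n + 1) * (b + (n + 1 : ℕ)) := by rw [← mul_assoc, pow_succ]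

theorem aeval_nodal_range_succ_eq_pow_mul (k : Type*) {R : Type*} [CommRing k] [Ring R]
    [Algebra k R] {L : ℕ → R} (hL : ∀ m, L 1 * L m = L 0 * L (m + 1) + L m) (n : ℕ) :
    aeval (L 1) (nodal (Finset.range (n + 1)) (Nat.cast : ℕ → k)) = L 0 ^ n * L (n + 1) := by
  induction n with
  | zero => simp [nodal]
  | succ n ih =>
    have hcomm : L 1 * L 0 ^ n = L 0 ^ n * (L 1 + n) :=
      mul_pow_eq_pow_mul_add_natCast (hL 0) n
    calc aeval (L 1) (nodal (Finset.range (n + 2)) (Nat.cast : ℕ → k))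
        = (L 1 - (n + 1 : ℕ)) * (L 0 ^ n * L (n + 1)) := by
          rw [Finset.range_add_one, nodal_insert_eq_nodal Finset.notMem_range_self, map_mul, ih]
          simp
      _ = L 0 ^ n * (L 1 + n - (n + 1 : ℕ)) * L (n + 1) := by
          rw [← mul_assoc, sub_mul, hcomm, (Nat.cast_commute (n + 1) (L 0 ^ n)).eq, ← mul_sub]
      _ = L 0 ^ n * (L 1 * L (n + 1) - L (n + 1)) := by
          push_cast
          noncomm_ring
      _ = L 0 ^ (n + 1) * L (n + 2) := by
          rw [hL (n + 1), add_sub_cancel_right, ← mul_assoc, pow_succ]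

section Eigenspace

variable {F M ι : Type*} [Field F] [AddCommGroup M] [Module F M]

theorem X_sub_C_mul_basis [DecidableEq ι] {s : Finset ι} (v : ι → F) {i : ι} (hi : i ∈ s) :
    (X - C (v i)) * Lagrange.basis s v i = C (nodalWeight s v i) * nodal s v := by
  rw [basis_eq_prod_sub_inv_mul_nodal_div hi, mul_left_comm,
    EuclideanDomain.mul_div_cancel' (X_sub_C_ne_zero _) (X_sub_C_dvd_nodal v hi)]

theorem aeval_basis_apply_mem_eigenspace [DecidableEq ι] {f : Module.End F M} {s : Finset ι}
    {v : ι → F} {x : M} (hx : aeval f (nodal s v) x = 0) {i : ι} (hi : i ∈ s) :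
    aeval f (Lagrange.basis s v i) x ∈ eigenspace f (v i) := by
  have hker : aeval f ((X - C (v i)) * Lagrange.basis s v i) x = 0 := by
    rw [X_sub_C_mul_basis v hi, map_mul, Module.End.mul_apply, hx, map_zero]
  simpa [sub_eq_zero] using hker

theorem mem_biSup_inf_eigenspace_of_aeval_nodal_eq_zero {f : Module.End F M} {s : Finset ι}
    {v : ι → F} (hv : Set.InjOn v s) {W : Submodule F M} (hW : W ∈ f.invtSubmodule) {x : M}
    (hxW : x ∈ W) (hx : aeval f (nodal s v) x = 0) :
    x ∈ ⨆ i ∈ s, W ⊓ eigenspace f (v i) := by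
  classical
  obtain rfl | hs := s.eq_empty_or_nonempty
  · simpa using hx
  have hsum : ∑ i ∈ s, aeval f (Lagrange.basis s v i) x = x := by
    rw [← LinearMap.sum_apply, ← map_sum, sum_basis hv hs, map_one, Module.End.one_apply]
  rw [← hsum]
  exact Submodule.sum_mem_biSup fun i hi =>
    ⟨aeval_apply_smul_mem_of_le_comap hxW _ _ hW, aeval_basis_apply_mem_eigenspace hx hi⟩

end Eigenspace

theorem exists_le_biSup_range_succ_of_isCompactElement {α : Type*} [CompleteLattice α] {a : α}
    (ha : IsCompactElement a) {f : ℕ → α} (haf : a ≤ ⨆ i, f i) :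
    ∃ k, a ≤ ⨆ i ∈ Finset.range (k + 1), f i := by
  obtain ⟨s, hs⟩ := CompleteLattice.IsCompactElement.exists_finset_of_le_iSup α ha f haf
  exact ⟨s.sup id, hs.trans (biSup_mono fun i hi => Finset.subset_range_sup_succ s hi)⟩

theorem L1_diagonalizable_on_invariant_subspace_general {F : Type*} [Field F] [CharZero F]
    {M : Type*} [AddCommGroup M] [Module F M]
    (L : ℕ → Module.End F M)
    (hL : ∀ m : ℕ, L 1 * L m = L 0 * L (m + 1) + L m)
    (V : Submodule F M) (hloc : ∀ v ∈ V, ∃ n : ℕ, L (n + 1) v = 0)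
    (hVinv : ∀ v ∈ V, L 1 v ∈ V) :
    iSupIndep (fun i : ℕ => V ⊓ eigenspace (L 1) (i : F)) ∧
    V = ⨆ i : ℕ, V ⊓ eigenspace (L 1) (i : F) := by
  refine ⟨((eigenspaces_iSupIndep (L 1)).comp Nat.cast_injective).mono fun i => inf_le_right,
    le_antisymm (fun v hv => ?_) (iSup_le fun i => inf_le_left)⟩
  obtain ⟨n, hn⟩ := hloc v hv
  have hroots : aeval (L 1) (nodal (Finset.range (n + 1)) (Nat.cast : ℕ → F)) v = 0 := by
    rw [aeval_nodal_range_succ_eq_pow_mul F hL, Module.End.mul_apply, hn, map_zero]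
  have hmem : v ∈ ⨆ i ∈ Finset.range (n + 1), V ⊓ eigenspace (L 1) (i : F) :=
    mem_biSup_inf_eigenspace_of_aeval_nodal_eq_zero Nat.cast_injective.injOn hVinv hv hroots
  exact SetLike.le_def.mp (iSup₂_le_iSup _ _) hmem

/-- **Lemma 5.** Let `M` be a vector space over a field `F` of characteristic zero
and `(Lₙ)` endomorphisms of `M` with `L₁Lₘ = L₀L_{m+1} + Lₘ` for all `m`, and such
that for every `v ∈ M` one has `L_k v = 0` for all sufficiently large `k`.
If `V ⊆ M` is a finite-dimensional `L₁`-invariant subspace, then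
`V = V₀ ⊕ V₁ ⊕ ⋯ ⊕ V_k` where `Vᵢ = {v ∈ V : L₁ v = i·v}`: the subspaces
`V ⊓ eigenspace(L₁, i)`, `i ∈ ℤ₊`, are independent and their span is `V`. -/
theorem L1_diagonalizable_on_invariant_subspace {F : Type*} [Field F] [CharZero F]
    {M : Type*} [AddCommGroup M] [Module F M]
    (L : ℕ → Module.End F M)
    (hL : ∀ m : ℕ, L 1 * L m = L 0 * L (m + 1) + L m)
    (hloc : ∀ v : M, ∃ N : ℕ, ∀ k, N ≤ k → L k v = 0)
    (V : Submodule F M) (hVfin : FiniteDimensional F V)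
    (hVinv : ∀ v ∈ V, L 1 v ∈ V) :
    iSupIndep (fun i : ℕ => V ⊓ Module.End.eigenspace (L 1) (i : F)) ∧
    ∃ k : ℕ, V = ⨆ i ∈ Finset.range (k + 1), V ⊓ Module.End.eigenspace (L 1) (i : F) := by
  obtain ⟨hindep, hspan⟩ := L1_diagonalizable_on_invariant_subspace_general L hL V
    (fun v _ => (hloc v).imp fun N hN => hN (N + 1) N.le_succ) hVinv
  have hVcompact : IsCompactElement V := V.fg_iff_compact.mp (Module.Finite.iff_fg.mp hVfin)
  obtain ⟨k, hk⟩ := exists_le_biSup_range_succ_of_isCompactElement hVcompact hspan.le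
  exact ⟨hindep, k, le_antisymm hk (iSup₂_le fun i _ => inf_le_left)⟩
end

section
/- Let (Rₙ)_{n ∈ ℤ₊} be a further sequence of 𝔽-linear endomorphisms of M, and suppose: (i) LₙLₘ = L₀L_{n+m} + n L_{n+m−1} for all n, m ∈ ℤ₊; (ii) R₁Rₘ = Rₘ and RₙRₘ = 0 for all n ≥ 2, m ∈ ℤ₊; (iii) RₙLₘ = Σ_{s=0}^{m} (−1)^s binom(m,s) L_{m−s}R_{n+s} for all n, m ∈ ℤ₊; (iv) for every v ∈ M there exists N with L_k v = 0 and R_k v = 0 for all k ≥ N. Let A be the (not necessarily unital) subalgebra of End(M) generated by L₁ and by the operators L₀^m R_{m+1} for all m ∈ ℤ₊. Then for every u ∈ M the subspace A·u = {a(u) : a ∈ A} of M is finite-dimensional. -/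
/-!
Put `D = L₁` and `Tₘ = L₀ᵐ Rₘ₊₁`. The relations say that the span of the `Tₘ` is closed under
multiplication and under commutators with `D`, so all powers of `D` can be moved to the left:
`A = F[D] · span {D, T₀, T₁, …}`. By locality only finitely many of the vectors `D u, T₀ u, T₁ u, …`
are nonzero, and it remains to see that each `F[D] w` is finitely generated. This holds because
`L₀ⁿ Lₙ₊₁ = D (D - 1) ⋯ (D - n)`, so that locality makes `w` a root of a monic polynomial in `D`.
-/

open Polynomial Submodule

section Semiring

variable {R A M : Type*} [CommSemiring R] [Semiring A] [Algebra R A]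
  [AddCommMonoid M] [Module R M] [Module A M] [IsScalarTower R A M]

theorem span_smul_span_singleton (s : Set A) (u : M) :
    span R s • span R {u} = span R ((fun a => a • u) '' s) := by
  have h : span R ((fun a => a • u) '' s) =
      (span R s).map ((LinearMap.toSpanSingleton A M u).restrictScalars R) := by
    rw [map_span]; rfl
  rw [h]
  refine le_antisymm (smul_le.2 fun a ha x hx => ?_) ?_
  · obtain ⟨r, rfl⟩ := mem_span_singleton.1 hx
    exact ⟨r • a, smul_mem _ r ha, by simp [smul_comm a r u]⟩
  · rintro _ ⟨a, ha, rfl⟩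
    exact smul_mem_smul ha (mem_span_singleton_self u)

theorem fg_smul_of_forall_fg_smul_span_singleton {I : Submodule R A}
    (hI : ∀ w : M, (I • span R {w}).FG) {N : Submodule R M} (hN : N.FG) : (I • N).FG := by
  induction N, hN using fg_induction with
  | singleton w => exact hI w
  | sup N₁ N₂ _ _ h₁ h₂ => exact smul_sup I N₁ N₂ ▸ h₁.sup h₂

theorem le_toSubmodule_mul (S : Subalgebra R A) (P : Submodule R A) :
    P ≤ Subalgebra.toSubmodule S * P :=
  le_mul_of_one_le_left' (one_le.2 (one_mem S))

theorem toSubmodule_mul_toSubmodule_mul (S : Subalgebra R A) (P : Submodule R A) :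
    Subalgebra.toSubmodule S * (Subalgebra.toSubmodule S * P) = Subalgebra.toSubmodule S * P := by
  rw [← mul_assoc, S.isIdempotentElem_toSubmodule]

theorem mul_adjoin_singleton_le {P : Submodule R A} {d : A}
    (hP : ∀ a ∈ P, a * d ∈ Subalgebra.toSubmodule (Algebra.adjoin R {d}) * P) :
    P * Subalgebra.toSubmodule (Algebra.adjoin R {d}) ≤
      Subalgebra.toSubmodule (Algebra.adjoin R {d}) * P := by
  refine mul_le.2 fun a ha k hk => ?_
  induction hk using Algebra.adjoin_induction generalizing a with
  | mem x hx => exact Set.mem_singleton_iff.1 hx ▸ hP a ha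
  | algebraMap r =>
    rw [← Algebra.commutes, ← Algebra.smul_def]
    exact le_toSubmodule_mul _ P (smul_mem P r ha)
  | add x y _ _ hx hy => exact mul_add a x y ▸ add_mem (hx a ha) (hy a ha)
  | mul x y _ _ hx hy =>
    rw [← mul_assoc]
    refine Submodule.mul_induction_on (hx a ha) (fun k hk b hb => ?_) fun z₁ z₂ h₁ h₂ => ?_
    · rw [mul_assoc, ← toSubmodule_mul_toSubmodule_mul]
      exact mul_mem_mul hk (hy b hb)
    · exact add_mul z₁ z₂ y ▸ add_mem h₁ h₂

theorem adjoin_singleton_mul_le {P : Submodule R A} {d : A} (hP : ∀ a ∈ P, d * a ∈ P) :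
    Subalgebra.toSubmodule (Algebra.adjoin R {d}) * P ≤ P := by
  refine mul_le.2 fun k hk a ha => ?_
  induction hk using Algebra.adjoin_induction generalizing a with
  | mem x hx => exact Set.mem_singleton_iff.1 hx ▸ hP a ha
  | algebraMap r => exact Algebra.smul_def r a ▸ smul_mem P r ha
  | add x y _ _ hx hy => exact add_mul x y a ▸ add_mem (hx a ha) (hy a ha)
  | mul x y _ _ hx hy => exact mul_assoc x y a ▸ hx _ (hy a ha)

theorem adjoin_eq_adjoin_singleton_mul_span {d : A} {s : Set A} (hd : d ∈ s)
    (hs : ∀ a ∈ s, ∀ b ∈ s, a * b ∈ Subalgebra.toSubmodule (Algebra.adjoin R {d}) * span R s) :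
    (NonUnitalAlgebra.adjoin R s).toSubmodule =
      Subalgebra.toSubmodule (Algebra.adjoin R {d}) * span R s := by
  set K := Subalgebra.toSubmodule (Algebra.adjoin R {d})
  set P := span R s
  have P_mul_P_le : P * P ≤ K * P := by
    rw [span_mul_span, span_le]
    rintro _ ⟨a, ha, b, hb, rfl⟩
    exact hs a ha b hb
  have P_mul_K_le : P * K ≤ K * P := mul_adjoin_singleton_le fun a ha =>
    P_mul_P_le (mul_mem_mul ha (subset_span hd))
  have KP_mul_KP_le : K * P * (K * P) ≤ K * P :=
    calc K * P * (K * P) = K * ((P * K) * P) := by simp only [mul_assoc]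
      _ ≤ K * (K * P * P) := mul_le_mul_right (mul_le_mul_left P_mul_K_le P) K
      _ = K * (P * P) := by rw [mul_assoc, toSubmodule_mul_toSubmodule_mul]
      _ ≤ K * (K * P) := mul_le_mul_right P_mul_P_le K
      _ = K * P := toSubmodule_mul_toSubmodule_mul _ P
  apply le_antisymm
  · let KP : NonUnitalSubalgebra R A :=
      (K * P).toNonUnitalSubalgebra fun _ _ hx hy => KP_mul_KP_le (mul_mem_mul hx hy)
    have hsKP : s ⊆ KP := fun a ha => le_toSubmodule_mul _ P (subset_span ha)
    exact NonUnitalAlgebra.adjoin_le hsKP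
  · calc K * P ≤ K * (NonUnitalAlgebra.adjoin R s).toSubmodule :=
          mul_le_mul_right (span_le.2 (NonUnitalAlgebra.subset_adjoin R)) K
      _ ≤ (NonUnitalAlgebra.adjoin R s).toSubmodule :=
          adjoin_singleton_mul_le fun _ ha =>
            (NonUnitalAlgebra.adjoin R s).mul_mem (NonUnitalAlgebra.subset_adjoin R hd) ha

end Semiring

section Ring

variable {R A M : Type*} [CommRing R] [Ring A] [Algebra R A]
  [AddCommGroup M] [Module R M] [Module A M] [IsScalarTower R A M]

theorem fg_adjoin_singleton_smul_span_singleton {d : A} {w : M} {p : R[X]} (hp : p.Monic)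
    (hpw : aeval d p • w = 0) :
    (Subalgebra.toSubmodule (Algebra.adjoin R {d}) • span R {w}).FG := by
  classical
  let evalAt : R[X] →ₗ[R] M :=
    (LinearMap.toSpanSingleton A M w).restrictScalars R ∘ₗ (aeval d).toLinearMap
  have evalAt_modByMonic (q : R[X]) : evalAt (q %ₘ p) = evalAt q := by
    conv_rhs => rw [← modByMonic_add_div q p]
    simp [evalAt, mul_comm p, add_smul, mul_smul, hpw]
  have modByMonic_mem (q : R[X]) : q %ₘ p ∈ degreeLT R p.natDegree := by
    nontriviality R
    rw [mem_degreeLT, ← degree_eq_natDegree hp.ne_zero]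
    exact degree_modByMonic_lt q hp
  have le_map : Subalgebra.toSubmodule (Algebra.adjoin R {d}) • span R {w} ≤
      (degreeLT R p.natDegree).map evalAt := by
    refine smul_le.2 fun a ha x hx => ?_
    rw [Subalgebra.mem_toSubmodule, Algebra.adjoin_singleton_eq_range_aeval] at ha
    obtain ⟨q, rfl⟩ := ha
    obtain ⟨r, rfl⟩ := mem_span_singleton.1 hx
    refine ⟨(r • q) %ₘ p, modByMonic_mem _, ?_⟩
    rw [evalAt_modByMonic]
    simp [evalAt, smul_comm _ r w]
  have map_le : (degreeLT R p.natDegree).map evalAt ≤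
      Subalgebra.toSubmodule (Algebra.adjoin R {d}) • span R {w} :=
    map_le_iff_le_comap.2 fun q _ =>
      smul_mem_smul (aeval_mem_adjoin_singleton R d) (mem_span_singleton_self w)
  rw [le_map.antisymm map_le, degreeLT_eq_span_X_pow]
  exact (fg_span (Finset.finite_toSet _)).map _

theorem fg_span_image_adjoin {d : A} {s : Set A} {u : M} (hd : d ∈ s)
    (hs : ∀ a ∈ s, ∀ b ∈ s, a * b ∈ Subalgebra.toSubmodule (Algebra.adjoin R {d}) * span R s)
    (hroot : ∀ w : M, ∃ p : R[X], p.Monic ∧ aeval d p • w = 0)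
    (hfin : ((fun a => a • u) '' s).Finite) :
    (span R ((fun a => a • u) '' (NonUnitalAlgebra.adjoin R s : Set A))).FG := by
  have orbit_eq : span R ((fun a => a • u) '' (NonUnitalAlgebra.adjoin R s : Set A)) =
      Subalgebra.toSubmodule (Algebra.adjoin R {d}) • span R ((fun a => a • u) '' s) :=
    calc span R ((fun a => a • u) '' (NonUnitalAlgebra.adjoin R s : Set A))
        = (NonUnitalAlgebra.adjoin R s).toSubmodule • span R {u} := by
          rw [← NonUnitalSubalgebra.coe_toSubmodule, ← span_smul_span_singleton, span_eq]
      _ = Subalgebra.toSubmodule (Algebra.adjoin R {d}) • span R s • span R {u} := by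
          rw [adjoin_eq_adjoin_singleton_mul_span hd hs, ← smul_eq_mul, Submodule.smul_assoc]
      _ = Subalgebra.toSubmodule (Algebra.adjoin R {d}) • span R ((fun a => a • u) '' s) := by
          rw [span_smul_span_singleton]
  rw [orbit_eq]
  refine fg_smul_of_forall_fg_smul_span_singleton (fun w => ?_) (fg_span hfin)
  obtain ⟨p, hp, hpw⟩ := hroot w
  exact fg_adjoin_singleton_smul_span_singleton hp hpw

end Ring

section Relations

variable {A : Type*} [Ring A] {a d : A}

theorem pow_mul_eq_sub_natCast_mul_pow (h : d * a = a * d + a) (m : ℕ) :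
    a ^ m * d = (d - m) * a ^ m := by
  induction m with
  | zero => simp
  | succ m ih =>
    calc a ^ (m + 1) * d = a ^ m * (d * a - a) := by
          rw [h, add_sub_cancel_right, pow_succ, mul_assoc]
      _ = a ^ m * d * a - a ^ m * a := by rw [mul_sub, mul_assoc]
      _ = (d - (m + 1 : ℕ)) * a ^ (m + 1) := by
          rw [ih, mul_assoc, ← pow_succ, Nat.cast_succ, ← sub_sub, sub_one_mul]

theorem pow_mul_mul_eq_sub {R : ℕ → A} (h : d * a = a * d + a)
    (hR : ∀ n, R n * d = d * R n - a * R (n + 1)) (m n : ℕ) :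
    a ^ m * R n * d = (d - m) * (a ^ m * R n) - a ^ (m + 1) * R (n + 1) := by
  calc a ^ m * R n * d = a ^ m * d * R n - a ^ (m + 1) * R (n + 1) := by
        rw [mul_assoc, hR, mul_sub, ← mul_assoc, ← mul_assoc, ← pow_succ]
    _ = (d - m) * (a ^ m * R n) - a ^ (m + 1) * R (n + 1) := by
        rw [pow_mul_eq_sub_natCast_mul_pow h, mul_assoc]

theorem pow_mul_mul_pow_mul_eq_ite {R : ℕ → A} (hcomm : ∀ n, Commute (R n) a)
    (h1 : ∀ m, R 1 * R m = R m) (h2 : ∀ n m, 2 ≤ n → R n * R m = 0) (m k : ℕ) :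
    a ^ m * R (m + 1) * (a ^ k * R (k + 1)) = if m = 0 then a ^ k * R (k + 1) else 0 := by
  have h : a ^ m * R (m + 1) * (a ^ k * R (k + 1)) =
      a ^ m * (a ^ k * (R (m + 1) * R (k + 1))) := by
    rw [mul_assoc, ((hcomm (m + 1)).pow_right k).left_comm]
  rw [h]
  split_ifs with hm
  · simp [hm, h1]
  · rw [h2 (m + 1) (k + 1) (by lia), mul_zero, mul_zero]

theorem monic_descPochhammer_of_ring (F : Type*) [Ring F] (n : ℕ) :
    (descPochhammer F n).Monic :=
  descPochhammer_map (Int.castRingHom F) n ▸ (monic_descPochhammer ℤ n).map _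

theorem pow_mul_eq_aeval_descPochhammer (F : Type*) [CommRing F] [Algebra F A] {L : ℕ → A}
    (hL : ∀ m, L 1 * L m = L 0 * L (m + 1) + L m) (n : ℕ) :
    L 0 ^ n * L (n + 1) = aeval (L 1) (descPochhammer F (n + 1)) := by
  induction n with
  | zero => simp
  | succ n ih =>
    calc L 0 ^ (n + 1) * L (n + 2) = L 0 ^ n * (L 1 * L (n + 1) - L (n + 1)) := by
          rw [hL, add_sub_cancel_right, pow_succ, mul_assoc]
      _ = (L 1 - n) * (L 0 ^ n * L (n + 1)) - L 0 ^ n * L (n + 1) := by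
          rw [mul_sub, ← mul_assoc, pow_mul_eq_sub_natCast_mul_pow (hL 0), mul_assoc]
      _ = (L 1 - (n + 1 : ℕ)) * aeval (L 1) (descPochhammer F (n + 1)) := by
          rw [ih, Nat.cast_succ, ← sub_sub, sub_one_mul]
      _ = aeval (L 1) (descPochhammer F (n + 2)) := by
          rw [descPochhammer_succ_right F (n + 1), mul_comm (descPochhammer F (n + 1))]
          simp

theorem mul_mem_adjoin_singleton_mul_span (F : Type*) [CommRing F] [Algebra F A] {R : ℕ → A}
    (hda : d * a = a * d + a) (hcomm : ∀ n, Commute (R n) a)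
    (hRd : ∀ n, R n * d = d * R n - a * R (n + 1))
    (h1 : ∀ m, R 1 * R m = R m) (h2 : ∀ n m, 2 ≤ n → R n * R m = 0) {x y : A}
    (hx : x ∈ {d} ∪ Set.range fun m => a ^ m * R (m + 1))
    (hy : y ∈ {d} ∪ Set.range fun m => a ^ m * R (m + 1)) :
    x * y ∈ Subalgebra.toSubmodule (Algebra.adjoin F {d}) *
      span F ({d} ∪ Set.range fun m => a ^ m * R (m + 1)) := by
  set s := {d} ∪ Set.range fun m => a ^ m * R (m + 1)
  have hdK : d ∈ Algebra.adjoin F {d} := Algebra.self_mem_adjoin_singleton F d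
  have mem_span (m : ℕ) : a ^ m * R (m + 1) ∈ span F s := subset_span (Or.inr ⟨m, rfl⟩)
  rcases hx with rfl | ⟨m, rfl⟩
  · exact mul_mem_mul hdK (subset_span hy)
  rcases hy with rfl | ⟨k, rfl⟩
  · have hdmK : y - m ∈ Algebra.adjoin F {y} := sub_mem hdK (natCast_mem _ m)
    rw [pow_mul_mul_eq_sub hda hRd]
    exact sub_mem (mul_mem_mul hdmK (mem_span m))
      (le_toSubmodule_mul _ _ (mem_span (m + 1)))
  · dsimp only
    rw [pow_mul_mul_pow_mul_eq_ite hcomm h1 h2]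
    split_ifs
    · exact le_toSubmodule_mul _ _ (mem_span k)
    · exact zero_mem _

end Relations

theorem orbit_finiteDimensional_general {F : Type*} [CommRing F]
    {M : Type*} [AddCommGroup M] [Module F M]
    (L R : ℕ → Module.End F M)
    (hL : ∀ m, L 1 * L m = L 0 * L (m + 1) + L m)
    (hR1 : ∀ m, R 1 * R m = R m)
    (hR2 : ∀ n m, 2 ≤ n → R n * R m = 0)
    (hRL0 : ∀ n, R n * L 0 = L 0 * R n)
    (hRL1 : ∀ n, R n * L 1 = L 1 * R n - L 0 * R (n + 1))
    (hlocL : ∀ v, ∃ n, L (n + 1) v = 0)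
    (u : M) (hlocR : ∃ N, ∀ k, N ≤ k → R k u = 0) :
    Module.Finite F
      (span F ((fun a : Module.End F M => a u) ''
        (NonUnitalAlgebra.adjoin F
          ({L 1} ∪ Set.range fun m : ℕ => L 0 ^ m * R (m + 1)) : Set (Module.End F M)))) := by
  refine .of_fg (fg_span_image_adjoin (d := L 1) (Or.inl rfl) (fun x hx y hy =>
    mul_mem_adjoin_singleton_mul_span F (hL 0) hRL0 hRL1 hR1 hR2 hx hy) (fun w => ?_) ?_)
  · obtain ⟨n, hn⟩ := hlocL w
    refine ⟨descPochhammer F (n + 1), monic_descPochhammer_of_ring F _, ?_⟩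
    rw [← pow_mul_eq_aeval_descPochhammer F hL, mul_smul, Module.End.smul_def (L _), hn, smul_zero]
  · obtain ⟨N, hN⟩ := hlocR
    refine (((Set.finite_Iio N).image fun m => (L 0 ^ m * R (m + 1)) u).insert 0 |>.insert
      (L 1 u)).subset ?_
    rintro _ ⟨_, rfl | ⟨m, rfl⟩, rfl⟩
    · exact Or.inl rfl
    · obtain hm | hm := lt_or_ge m N
      · exact Or.inr (Or.inr ⟨m, hm, rfl⟩)
      · exact Or.inr (Or.inl (by simp [hN (m + 1) (by lia)]))

/-- **Lemma 6.** Let `M` be a vector space over a field `F` of characteristic zero,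
and `(Lₙ)`, `(Rₙ)` endomorphisms of `M` satisfying the relations (5)–(7) and the
locality condition. Let `A` be the non-unital subalgebra of `End(M)` generated by
`L₁` and by `L₀^m R_{m+1}`, `m ∈ ℤ₊`. Then for every `u ∈ M` the subspace
`A·u = {a(u) : a ∈ A}` is finite-dimensional. -/
theorem orbit_finiteDimensional {F : Type*} [Field F] [CharZero F]
    {M : Type*} [AddCommGroup M] [Module F M]
    (L R : ℕ → Module.End F M)
    (h1 : ∀ n m : ℕ, L n * L m = L 0 * L (n + m) + (n : F) • L (n + m - 1))
    (h2a : ∀ m : ℕ, R 1 * R m = R m)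
    (h2b : ∀ n m : ℕ, 2 ≤ n → R n * R m = 0)
    (h3 : ∀ n m : ℕ, R n * L m =
      ∑ s ∈ Finset.range (m + 1),
        ((-1 : F) ^ s * (m.choose s : F)) • (L (m - s) * R (n + s)))
    (hloc : ∀ v : M, ∃ N : ℕ, ∀ k, N ≤ k → L k v = 0 ∧ R k v = 0)
    (u : M) :
    FiniteDimensional F
      (Submodule.span F ((fun a : Module.End F M => a u) ''
        (NonUnitalAlgebra.adjoin F
          ({L 1} ∪ Set.range fun m : ℕ => L 0 ^ m * R (m + 1)) : Set (Module.End F M)))) :=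
  orbit_finiteDimensional_general L R (fun m => by simpa [add_comm] using h1 1 m) h2a h2b
    (fun n => by simpa using h3 n 0)
    (fun n => by simpa [Finset.sum_range_succ, sub_eq_add_neg] using h3 n 1)
    (fun v => (hloc v).imp fun N hN => (hN (N + 1) N.le_succ).1)
    u ((hloc u).imp fun _ hN k hk => (hN k hk).2)
end

section
/- Suppose the endomorphisms Lₙ satisfy LₙLₘ = L₀L_{n+m} + n L_{n+m−1} for all n, m ∈ ℤ₊. Let N > 1 be an integer and let χ ∈ M satisfy L₀χ = 0 and L₁χ = (N−1)χ. Then χ = 0. -/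
/-!
The relations for `(n, m)` and for `(n + m, 0)` contain the same term `L₀ L_{n+m}`; eliminating it
gives `Lₙ Lₘ + m L_{n+m-1} = L_{n+m} L₀`. Hence `L₁² + L₁` vanishes on the kernel of `L₀`, so the
only eigenvalues `L₁` can have there are `0` and `-1`.
-/

theorem mul_add_smul_eq_mul_zero {R A : Type*} [Semiring R] [Semiring A] [Module R A] {L : ℕ → A}
    (hL : ∀ n m : ℕ, L n * L m = L 0 * L (n + m) + (n : R) • L (n + m - 1)) (n m : ℕ) :
    L n * L m + (m : R) • L (n + m - 1) = L (n + m) * L 0 :=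
  calc
    L n * L m + (m : R) • L (n + m - 1)
      = L 0 * L (n + m) + ((n + m : ℕ) : R) • L (n + m - 1) := by
        rw [hL n m, add_assoc, ← add_smul, ← Nat.cast_add]
    _ = L (n + m) * L 0 := (hL (n + m) 0).symm

section Kernel

variable {R M : Type*} [CommSemiring R] [AddCommMonoid M] [Module R M] {L : ℕ → Module.End R M}
  {x : M}

theorem apply_apply_add_smul_eq_zero
    (hL : ∀ n m : ℕ, L n * L m = L 0 * L (n + m) + (n : R) • L (n + m - 1))
    (h0 : L 0 x = 0) (n m : ℕ) :
    L n (L m x) + (m : R) • L (n + m - 1) x = 0 :=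
  calc
    L n (L m x) + (m : R) • L (n + m - 1) x
      = L (n + m) (L 0 x) := LinearMap.congr_fun (mul_add_smul_eq_mul_zero hL n m) x
    _ = 0 := by rw [h0, map_zero]

theorem eigenvalue_mul_add_one_smul_eq_zero
    (hL : ∀ n m : ℕ, L n * L m = L 0 * L (n + m) + (n : R) • L (n + m - 1))
    {c : R} (h0 : L 0 x = 0) (h1 : L 1 x = c • x) :
    (c * (c + 1)) • x = 0 :=
  calc
    (c * (c + 1)) • x = L 1 (L 1 x) + L 1 x := by
      rw [h1, map_smul, h1, smul_smul, ← add_smul, mul_add_one]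
    _ = 0 := by simpa only [Nat.cast_one, one_smul] using apply_apply_add_smul_eq_zero hL h0 1 1

end Kernel

theorem chi_eq_zero_general {R : Type*} [CommSemiring R] [IsDomain R]
    {M : Type*} [AddCommMonoid M] [Module R M] [Module.IsTorsionFree R M]
    (L : ℕ → Module.End R M)
    (hL : ∀ n m : ℕ, L n * L m = L 0 * L (n + m) + (n : R) • L (n + m - 1))
    (c : R) (hc : c ≠ 0) (hc' : c + 1 ≠ 0) (χ : M)
    (h0 : L 0 χ = 0) (h1 : L 1 χ = c • χ) :
    χ = 0 :=
  (smul_eq_zero.mp (eigenvalue_mul_add_one_smul_eq_zero hL h0 h1)).resolve_left (mul_ne_zero hc hc')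

/-- Let `M` be a vector space over a field `F` of characteristic zero and `(Lₙ)`
endomorphisms of `M` with `LₙLₘ = L₀L_{n+m} + n·L_{n+m−1}`. If `N > 1` is an
integer and `χ ∈ M` satisfies `L₀χ = 0` and `L₁χ = (N−1)χ`, then `χ = 0`. -/
theorem chi_eq_zero {F : Type*} [Field F] [CharZero F]
    {M : Type*} [AddCommGroup M] [Module F M]
    (L : ℕ → Module.End F M)
    (hL : ∀ n m : ℕ, L n * L m = L 0 * L (n + m) + (n : F) • L (n + m - 1))
    (N : ℕ) (hN : 1 < N) (χ : M)
    (h0 : L 0 χ = 0) (h1 : L 1 χ = ((N : F) - 1) • χ) :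
    χ = 0 :=
  chi_eq_zero_general L hL (N - 1) (sub_ne_zero.mpr (Nat.cast_ne_one.mpr hN.ne'))
    (by simpa only [sub_add_cancel, Nat.cast_ne_zero] using Nat.ne_zero_of_lt hN) χ h0 h1
end
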